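/- arXiv:2412.04589 — 2 statements merged into one kernel-verified Lean document; each statement's English description precedes it below -/
import Mathlib

section
/- Under the setting of the Cox construction with one jump and random jump size — namely: (Ω, 𝓕, 𝔽, P) satisfying the usual conditions; λ a nonnegative 𝔽-progressively measurable process with Λ_t := ∫_0^t λ_s ds finite for all t and Λ_∞ = ∞ a.s.; E ~ Exp(1) independent of 𝓕_∞; τ := inf{t > 0 : Λ_t ≥ E}; J an integrable random variable with P(J ≠ 0) = 1 independent of 𝓕_∞ ∨ σ(E); and 𝔾̃ the right-continuous regularization of (𝓕_t ∨ σ(J·1_{{τ ≤ s}} : s ≤ t))_{t≥0} — the following holds: for any measurable function h : ℝ → ℝ such that h(J) is integrable, the process (h(J)·1_{{τ ≤ t}} − E[h(J)]·Λ_{τ∧t})_{t≥0} is a 𝔾̃-martingale. -/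
open MeasureTheory ProbabilityTheory Filter Set
open scoped ENNReal Topology

noncomputable section

namespace InvMarkovJump

variable {Ω : Type*}

/-- `F` is a filtration (for times `t ≥ 0`) of sub-σ-algebras of `m0`. -/
def IsFiltration (m0 : MeasurableSpace Ω) (F : ℝ → MeasurableSpace Ω) : Prop :=
  (∀ s t : ℝ, 0 ≤ s → s ≤ t → F s ≤ F t) ∧ ∀ t : ℝ, F t ≤ m0

/-- The right-continuous regularization `(⋂_{s > t} F s)_{t ≥ 0}` of a filtration. -/
def rcReg (F : ℝ → MeasurableSpace Ω) : ℝ → MeasurableSpace Ω :=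
  fun t => ⨅ s ∈ Set.Ioi t, F s

/-- All sample paths of `M` are right-continuous (at every time `t ≥ 0`). -/
def RCPaths (M : ℝ → Ω → ℝ) : Prop :=
  ∀ ω, ∀ t : ℝ, 0 ≤ t → ContinuousWithinAt (fun s => M s ω) (Set.Ici t) t

/-- `M` is a martingale (for times `t ≥ 0`) with respect to the filtration `F`
under the measure `μ`: it is adapted, integrable, and `E[M_t | F_s] = M_s` a.s.
for all `0 ≤ s ≤ t`. -/
def IsMartingale {m0 : MeasurableSpace Ω} (μ : Measure Ω)
    (F : ℝ → MeasurableSpace Ω) (M : ℝ → Ω → ℝ) : Prop :=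
  (∀ t : ℝ, 0 ≤ t → Integrable (M t) μ) ∧
  (∀ t : ℝ, 0 ≤ t → Measurable[F t] (M t)) ∧
  ∀ s t : ℝ, 0 ≤ s → s ≤ t → μ[M t|F s] =ᵐ[μ] M s

/-- `F` is immersed in `G`: `F ⊆ G` and every `F`-martingale (with right-continuous
sample paths) is a `G`-martingale. -/
def Immersed {m0 : MeasurableSpace Ω} (μ : Measure Ω)
    (F G : ℝ → MeasurableSpace Ω) : Prop :=
  (∀ t : ℝ, 0 ≤ t → F t ≤ G t) ∧
  ∀ M : ℝ → Ω → ℝ, RCPaths M → IsMartingale μ F M → IsMartingale μ G M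

/-- The usual conditions: the filtration is right-continuous and `F 0` contains
all `μ`-null sets. -/
def UsualConditions {m0 : MeasurableSpace Ω} (μ : Measure Ω)
    (F : ℝ → MeasurableSpace Ω) : Prop :=
  IsFiltration m0 F ∧ (∀ t : ℝ, 0 ≤ t → F t = rcReg F t) ∧
    ∀ s : Set Ω, μ s = 0 → MeasurableSet[F 0] s

/-- `E` is `Exp(1)`-distributed: `P(E > x) = e^{-x}` for all `x ≥ 0`. -/
def IsExpOne {m0 : MeasurableSpace Ω} (μ : Measure Ω) (E : Ω → ℝ) : Prop :=
  Measurable E ∧ ∀ x : ℝ, 0 ≤ x → μ {ω | x < E ω} = ENNReal.ofReal (Real.exp (-x))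

/-- `F_∞ = ⋁_{t ≥ 0} F t`. -/
def Finfty (F : ℝ → MeasurableSpace Ω) : MeasurableSpace Ω :=
  ⨆ t ∈ Set.Ici (0:ℝ), F t

/-- The natural filtration `(σ(Y_s : 0 ≤ s ≤ t))_{t ≥ 0}` of a process `Y`. -/
def natFilt {β : Type*} [MeasurableSpace β] (Y : ℝ → Ω → β) : ℝ → MeasurableSpace Ω :=
  fun t => ⨆ s ∈ Set.Icc (0:ℝ) t, MeasurableSpace.comap (Y s) inferInstance

/-- Progressive measurability of a process `u` with respect to the filtration `F`:
for every `t ≥ 0`, `(s, ω) ↦ u s ω` on `[0, t] × Ω` is `B([0,t]) ⊗ F t`-measurable. -/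
def ProgMeas (F : ℝ → MeasurableSpace Ω) (u : ℝ → Ω → ℝ) : Prop :=
  ∀ t : ℝ, 0 ≤ t →
    Measurable[MeasurableSpace.prod inferInstance (F t)]
      (fun p : Set.Icc (0:ℝ) t × Ω => u p.1 p.2)

/-- Deterministic hitting-time facts for a continuous nondecreasing compensator. -/
lemma hit_aux (L : ℝ → ℝ) (hmono : Monotone L) (hcont : ContinuousOn L (Set.Ici 0))
    (h0 : L 0 = 0) (hinf : Tendsto L atTop atTop) (e : ℝ) (he : 0 < e) (τ : ℝ)
    (hτ : τ = sInf {t : ℝ | 0 < t ∧ e ≤ L t}) :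
    (∀ t : ℝ, 0 ≤ t → (τ ≤ t ↔ e ≤ L t)) ∧ ∀ t : ℝ, L (min τ t) = min e (L t) := by
  have hS : {t : ℝ | 0 < t ∧ e ≤ L t} = Set.Ici 0 ∩ L ⁻¹' (Set.Ici e) := by
    ext t
    simp only [mem_ofPred_eq, mem_inter_iff, mem_Ici, mem_preimage]
    refine ⟨fun h => ⟨h.1.le, h.2⟩, fun h => ⟨lt_of_le_of_ne h.1 ?_, h.2⟩⟩
    rintro rfl
    linarith [h.2]
  have hcl : IsClosed {t : ℝ | 0 < t ∧ e ≤ L t} := by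
    rw [hS]
    exact hcont.preimage_isClosed_of_isClosed isClosed_Ici isClosed_Ici
  have hne : {t : ℝ | 0 < t ∧ e ≤ L t}.Nonempty := by
    obtain ⟨t, h1, h2⟩ := ((hinf.eventually_ge_atTop e).and (eventually_gt_atTop 0)).exists
    exact ⟨t, h2, h1⟩
  have hbdd : BddBelow {t : ℝ | 0 < t ∧ e ≤ L t} := ⟨0, fun t ht => ht.1.le⟩
  have hmem := hcl.csInf_mem hne hbdd
  rw [← hτ] at hmem
  have hLτ : L τ = e := by
    have hsub := intermediate_value_Icc (a := 0) (b := τ) hmem.1.le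
      (hcont.mono Icc_subset_Ici_self)
    obtain ⟨x, hx, hxe⟩ := hsub ⟨by rw [h0]; exact he.le, hmem.2⟩
    have hx0 : 0 < x := by
      refine lt_of_le_of_ne hx.1 ?_
      rintro rfl
      linarith
    have : τ ≤ x := by
      rw [hτ]
      exact csInf_le hbdd ⟨hx0, hxe.ge⟩
    rw [le_antisymm this hx.2, hxe]
  refine ⟨fun t ht => ⟨fun h => hLτ ▸ hmono h, fun h => ?_⟩, fun t => ?_⟩
  · rw [hτ]
    refine csInf_le hbdd ?_
    rw [hS]
    exact ⟨ht, h⟩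
  · rw [hmono.map_min, hLτ]

/-- Basic properties of the integral process of a nonnegative locally integrable function. -/
lemma prim_aux (u : ℝ → ℝ) (hu : ∀ s, 0 ≤ u s)
    (hint : ∀ t : ℝ, IntegrableOn u (Set.Ioc 0 t) volume) :
    Monotone (fun t => ∫ s in Set.Ioc 0 t, u s) ∧
    ContinuousOn (fun t => ∫ s in Set.Ioc 0 t, u s) (Set.Ici 0) := by
  constructor
  · intro a b hab
    exact setIntegral_mono_set (hint b) (Eventually.of_forall hu)
      (LE.le.eventuallyLE (Ioc_subset_Ioc_right hab))
  · intro x hx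
    have h1 : ContinuousOn (fun t => ∫ s in Set.Ioc 0 t, u s) (Set.Icc 0 (x + 1)) :=
      intervalIntegral.continuousOn_primitive
        ((integrableOn_Icc_iff_integrableOn_Ioc).2 (hint (x + 1)))
    have h2 := h1 x ⟨hx, by linarith⟩
    refine h2.mono_of_mem_nhdsWithin ?_
    have : Set.Iio (x + 1) ∈ 𝓝[Set.Ici 0] x :=
      mem_nhdsWithin_of_mem_nhds (Iio_mem_nhds (by linarith))
    filter_upwards [this, self_mem_nhdsWithin] with y hy hy0
    exact ⟨hy0, le_of_lt hy⟩

/-- Measurability of a progressively measurable integral up to a measurable time. -/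
lemma meas_integral [m : MeasurableSpace Ω] (t : ℝ) (u : ℝ → Ω → ℝ)
    (hu : Measurable (fun p : Set.Icc (0:ℝ) t × Ω => u p.1 p.2))
    (T : Ω → ℝ) (hT : Measurable T) (hTt : ∀ ω, T ω ≤ t) :
    Measurable (fun ω => ∫ s in Set.Ioc 0 (T ω), u s ω) := by
  have h1 : Measurable (fun p : Set.Icc (0:ℝ) t × Ω =>
      if 0 < (p.1 : ℝ) ∧ (p.1 : ℝ) ≤ T p.2 then u p.1 p.2 else 0) := by
    refine Measurable.ite ?_ hu measurable_const
    refine MeasurableSet.inter ?_ ?_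
    · exact measurableSet_lt measurable_const (measurable_subtype_coe.comp measurable_fst)
    · exact measurableSet_le (measurable_subtype_coe.comp measurable_fst)
        (hT.comp measurable_snd)
  have : IsFiniteMeasure (Measure.comap (Subtype.val : Set.Icc (0:ℝ) t → ℝ) (volume : Measure ℝ)) :=
    ⟨by
      rw [(MeasurableEmbedding.subtype_coe measurableSet_Icc).comap_apply]
      simp only [image_univ, Subtype.range_coe]
      exact measure_Icc_lt_top⟩
  have h2 := (h1.stronglyMeasurable.integral_prod_left'
    (μ := Measure.comap Subtype.val (volume : Measure ℝ))).measurable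
  convert h2 using 2 with ω
  rw [integral_subtype_comap measurableSet_Icc
    (fun s => if 0 < s ∧ s ≤ T ω then u s ω else 0)]
  have h3 : (fun s => if 0 < s ∧ s ≤ T ω then u s ω else 0)
      = (Set.Ioc 0 (T ω)).indicator (fun s => u s ω) := by
    ext s
    simp [Set.indicator, mem_Ioc]
  rw [h3, setIntegral_indicator measurableSet_Ioc,
    Set.inter_eq_right.2 (show Set.Ioc 0 (T ω) ⊆ Set.Icc 0 t from
      fun s hs => ⟨hs.1.le, hs.2.trans (hTt ω)⟩)]

/-- Modification on null sets keeps measurability for a complete sub-σ-algebra. -/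
lemma meas_of_ae {m0 : MeasurableSpace Ω} (μ : Measure Ω) (m : MeasurableSpace Ω)
    (hm : ∀ s : Set Ω, μ s = 0 → MeasurableSet[m] s) {f g : Ω → ℝ}
    (hf : Measurable[m] f) (hfg : f =ᵐ[μ] g) : Measurable[m] g := by
  intro U hU
  have hN : μ {ω | ¬ f ω = g ω} = 0 := hfg
  have h1 : g ⁻¹' U = (f ⁻¹' U ∩ {ω | ¬ f ω = g ω}ᶜ) ∪ (g ⁻¹' U ∩ {ω | ¬ f ω = g ω}) := by
    ext ω
    by_cases h : f ω = g ω <;> simp [h]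
  rw [h1]
  exact ((hf hU).inter (hm _ hN).compl).union
    (hm _ (measure_mono_null inter_subset_right hN))

lemma measSet_of_ae {m0 : MeasurableSpace Ω} (μ : Measure Ω) (m : MeasurableSpace Ω)
    (hm : ∀ s : Set Ω, μ s = 0 → MeasurableSet[m] s) {A B : Set Ω}
    (hA : MeasurableSet[m] A) (hAB : ∀ᵐ ω ∂μ, ω ∈ A ↔ ω ∈ B) : MeasurableSet[m] B := by
  have hN : μ {ω | ¬ (ω ∈ A ↔ ω ∈ B)} = 0 := hAB
  have h1 : B = (A ∩ {ω | ¬ (ω ∈ A ↔ ω ∈ B)}ᶜ) ∪ (B ∩ {ω | ¬ (ω ∈ A ↔ ω ∈ B)}) := by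
    ext ω
    by_cases hA : ω ∈ A <;> by_cases hB : ω ∈ B <;> simp [hA, hB]
  rw [h1]
  exact (hA.inter (hm _ hN).compl).union
    (hm _ (measure_mono_null inter_subset_right hN))

/-- Trace of the enlarged σ-algebra on `{τ > u}`. -/
lemma trace_aux (m : MeasurableSpace Ω) (Y : ℝ → Ω → ℝ) (u : ℝ) (S : Set Ω)
    (hY : ∀ s ≤ u, ∀ ω ∈ S, Y s ω = 0) (A : Set Ω)
    (hA : MeasurableSet[m ⊔ natFilt Y u] A) :
    ∃ B, MeasurableSet[m] B ∧ ∀ ω ∈ S, (ω ∈ A ↔ ω ∈ B) := by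
  have h1 : MeasurableSpace.comap (Subtype.val : S → Ω) (m ⊔ natFilt Y u)
      ≤ MeasurableSpace.comap (Subtype.val : S → Ω) m := by
    rw [MeasurableSpace.comap_sup]
    refine sup_le le_rfl ?_
    unfold natFilt
    simp only [MeasurableSpace.comap_iSup]
    refine iSup₂_le fun s hs => ?_
    rw [MeasurableSpace.comap_comp]
    have : (Y s ∘ (Subtype.val : S → Ω)) = fun _ => 0 := by
      ext ω
      exact hY s hs.2 ω.1 ω.2
    rw [this, MeasurableSpace.comap_const]
    exact bot_le
  obtain ⟨B, hB, hBA⟩ := h1 _ ⟨A, hA, rfl⟩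
  refine ⟨B, hB, fun ω hω => ?_⟩
  have := congrArg (fun s => (⟨ω, hω⟩ : S) ∈ s) hBA
  simpa using this.symm

/-- Facts about the standard exponential law. -/
lemma exp_pos {m0 : MeasurableSpace Ω} (μ : Measure Ω) [IsProbabilityMeasure μ]
    (E : Ω → ℝ) (hE : IsExpOne μ E) : ∀ᵐ ω ∂μ, 0 < E ω := by
  have h := hE.2 0 le_rfl
  simp only [neg_zero, Real.exp_zero, ENNReal.ofReal_one] at h
  exact (prob_compl_eq_zero_iff (measurableSet_lt measurable_const hE.1)).2 h

lemma exp_integrable {m0 : MeasurableSpace Ω} (μ : Measure Ω) [IsProbabilityMeasure μ]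
    (E : Ω → ℝ) (hE : IsExpOne μ E) : Integrable E μ := by
  have hpos := exp_pos μ E hE
  have hnn : 0 ≤ᵐ[μ] E := hpos.mono fun ω h => le_of_lt h
  refine ⟨hE.1.aestronglyMeasurable, ?_⟩
  rw [hasFiniteIntegral_iff_ofReal hnn, lintegral_eq_lintegral_meas_lt μ hnn hE.1.aemeasurable,
    setLIntegral_congr_fun (g := fun x => ENNReal.ofReal (Real.exp (-x))) measurableSet_Ioi
      (fun x hx => hE.2 x (le_of_lt hx))]
  exact (integrableOn_exp_neg_Ioi 0).lintegral_lt_top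

lemma exp_phi {m0 : MeasurableSpace Ω} (μ : Measure Ω) [IsProbabilityMeasure μ]
    (E : Ω → ℝ) (hE : IsExpOne μ E) (a : ℝ) (ha : 0 ≤ a) :
    ∫ ω, ((if E ω ≤ a then (1:ℝ) else 0) - min (E ω) a) ∂μ = 0 := by
  have hpos := exp_pos μ E hE
  have hEi := exp_integrable μ E hE
  have hmin : Integrable (fun ω => min (E ω) a) μ := hEi.inf (integrable_const a)
  have hset : MeasurableSet {ω | a < E ω} := measurableSet_lt measurable_const hE.1
  have hreal : ∀ x, 0 ≤ x → μ.real {ω | x < E ω} = Real.exp (-x) := fun x hx => by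
    rw [measureReal_def, hE.2 x hx, ENNReal.toReal_ofReal (Real.exp_pos _).le]
  have h1 : (fun ω => if E ω ≤ a then (1:ℝ) else 0)
      = fun ω => 1 - ({ω | a < E ω}.indicator (fun _ => (1:ℝ)) ω) := by
    ext ω
    by_cases h : E ω ≤ a
    · simp [h]
    · simp [h, not_le.1 h]
  have hi : Integrable ({ω | a < E ω}.indicator (fun _ => (1:ℝ))) μ :=
    (integrable_const 1).indicator hset
  have h2 : ∫ ω, (if E ω ≤ a then (1:ℝ) else 0) ∂μ = 1 - Real.exp (-a) := by
    rw [h1, integral_sub (integrable_const 1) hi, integral_indicator_const _ hset, hreal a ha]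
    simp
  have hint1 : Integrable (fun ω => if E ω ≤ a then (1:ℝ) else 0) μ := by
    rw [h1]
    exact (integrable_const 1).sub hi
  have h3 : ∫ ω, min (E ω) a ∂μ = 1 - Real.exp (-a) := by
    rw [hmin.integral_eq_integral_meas_lt (hpos.mono fun ω h => le_min (le_of_lt h) ha)]
    have h4 : ∀ x ∈ Set.Ioi (0:ℝ), μ.real {ω | x < min (E ω) a}
        = (Set.Iio a).indicator (fun x => Real.exp (-x)) x := by
      intro x hx
      by_cases hxa : x < a
      · simp only [lt_min_iff, hxa, and_true, mem_Iio, indicator_of_mem]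
        exact hreal x (le_of_lt hx)
      · simp [hxa]
    rw [setIntegral_congr_fun measurableSet_Ioi h4, setIntegral_indicator measurableSet_Iio,
      Ioi_inter_Iio, ← integral_Ioc_eq_integral_Ioo, ← intervalIntegral.integral_of_le ha,
      intervalIntegral.integral_comp_neg (fun x => Real.exp x), integral_exp]
    simp
  rw [integral_sub hint1 hmin, h2, h3, sub_self]

lemma meas_Iic [m : MeasurableSpace Ω] {f : Ω → ℝ}
    (hf : ∀ a, MeasurableSet (f ⁻¹' Set.Iic a)) : Measurable f :=
  measurable_of_Iic hf

lemma meas_comb [m : MeasurableSpace Ω] {f g : Ω → ℝ} (c : ℝ) (hf : Measurable f)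
    (hg : Measurable g) : Measurable (fun ω => f ω - c * g ω) :=
  hf.sub (hg.const_mul c)

lemma key_phi (m : MeasurableSpace Ω) {m0 : MeasurableSpace Ω} (μ : Measure Ω) [IsProbabilityMeasure μ]
    (E : Ω → ℝ) (hE : IsExpOne μ E) (hm : m ≤ m0)
    (hind : Indep (MeasurableSpace.comap E inferInstance) m μ)
    (Z : Ω → ℝ) (hZ : Measurable[m] Z) (hZ0 : ∀ ω, 0 ≤ Z ω)
    (B : Set Ω) (hB : MeasurableSet[m] B) :
    ∫ ω in B, ((if E ω ≤ Z ω then (1:ℝ) else 0) - min (E ω) (Z ω)) ∂μ = 0 := by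
  classical
  have hEi := exp_integrable μ E hE
  have hW : Measurable[m] (fun ω => (Z ω, B.indicator (fun _ => (1:ℝ)) ω)) :=
    hZ.prodMk (measurable_const.indicator hB)
  have hindF : IndepFun E (fun ω => (Z ω, B.indicator (fun _ => (1:ℝ)) ω)) μ := by
    rw [IndepFun_iff_Indep]
    exact indep_of_indep_of_le_right hind hW.comap_le
  have hW0 : Measurable[m0] (fun ω => (Z ω, B.indicator (fun _ => (1:ℝ)) ω)) := hW.mono hm le_rfl
  have hmap := (indepFun_iff_map_prod_eq_prod_map_map hE.1.aemeasurable hW0.aemeasurable).1 hindF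
  let f : ℝ × (ℝ × ℝ) → ℝ := fun p =>
    ((if p.1 ≤ p.2.1 then (1:ℝ) else 0) - min p.1 p.2.1) * p.2.2
  have hf : Measurable f := by
    refine Measurable.mul (Measurable.sub ?_ ?_) (by fun_prop)
    · exact Measurable.ite (measurableSet_le (by fun_prop) (by fun_prop))
        measurable_const measurable_const
    · exact Measurable.min (by fun_prop) (by fun_prop)
  have hpair : Measurable[m0] (fun ω => (E ω, (Z ω, B.indicator (fun _ => (1:ℝ)) ω))) :=
    hE.1.prodMk hW0
  have e1 : ∫ ω in B, ((if E ω ≤ Z ω then (1:ℝ) else 0) - min (E ω) (Z ω)) ∂μ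
      = ∫ ω, f (E ω, (Z ω, B.indicator (fun _ => (1:ℝ)) ω)) ∂μ := by
    rw [← integral_indicator (hm _ hB)]
    refine integral_congr_ae (Eventually.of_forall fun ω => ?_)
    by_cases h : ω ∈ B <;> simp [f, h]
  have hfint : Integrable (fun ω => f (E ω, (Z ω, B.indicator (fun _ => (1:ℝ)) ω))) μ := by
    refine Integrable.mono' ((integrable_const 1).add hEi)
      (hf.comp hpair).aestronglyMeasurable ?_
    filter_upwards [exp_pos μ E hE] with ω hω
    have := hZ0 ω
    by_cases h : ω ∈ B
    · simp only [f, h, indicator_of_mem, mul_one, Real.norm_eq_abs, Pi.add_apply]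
      have h1 : 0 ≤ min (E ω) (Z ω) := le_min hω.le this
      have h2 : min (E ω) (Z ω) ≤ E ω := min_le_left _ _
      rw [abs_le]
      split_ifs <;> constructor <;> linarith
    · simp only [f, h, not_false_eq_true, indicator_of_notMem, mul_zero, norm_zero, Pi.add_apply]
      linarith
  rw [e1, ← integral_map hpair.aemeasurable hf.aestronglyMeasurable, hmap, integral_prod_symm]
  · have hae : ∀ᵐ q ∂(μ.map (fun ω => (Z ω, B.indicator (fun _ => (1:ℝ)) ω))),
        ∫ x, f (x, q) ∂(μ.map E) = 0 := by
      rw [ae_map_iff hW0.aemeasurable]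
      · refine Eventually.of_forall fun ω => ?_
        have hfx : Measurable (fun x => f (x, (Z ω, B.indicator (fun _ => (1:ℝ)) ω))) :=
          hf.comp (measurable_id.prodMk measurable_const)
        rw [integral_map hE.1.aemeasurable hfx.aestronglyMeasurable]
        simp only [f]
        rw [integral_mul_const, exp_phi μ E hE _ (hZ0 ω), zero_mul]
      · exact hf.stronglyMeasurable.integral_prod_left'.measurable (measurableSet_singleton 0)
    rw [integral_congr_ae hae]
    simp
  · rw [← hmap]
    exact (integrable_map_measure hf.aestronglyMeasurable hpair.aemeasurable).2 hfint

lemma key_J {m0 : MeasurableSpace Ω} (μ : Measure Ω) [IsProbabilityMeasure μ]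
    (J : Ω → ℝ) (hJ : Measurable J) (m : MeasurableSpace Ω) (hm : m ≤ m0)
    (hind : Indep (MeasurableSpace.comap J inferInstance) m μ)
    (h : ℝ → ℝ) (hh : Measurable h) (A : Set Ω) (hA : MeasurableSet[m] A) :
    ∫ ω in A, h (J ω) ∂μ = (∫ ω, h (J ω) ∂μ) * ∫ ω in A, (1:ℝ) ∂μ := by
  have h1 : IndepFun J (A.indicator (fun _ => (1:ℝ))) μ := by
    rw [IndepFun_iff_Indep]
    exact indep_of_indep_of_le_right hind (measurable_const.indicator hA : Measurable[m] _).comap_le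
  have h2 : IndepFun (fun ω => h (J ω)) (A.indicator (fun _ => (1:ℝ))) μ :=
    h1.comp hh measurable_id
  have h3 := h2.integral_mul_eq_mul_integral (hh.comp hJ).aestronglyMeasurable
    (measurable_const.indicator (hm _ hA)).aestronglyMeasurable
  rw [integral_indicator (hm _ hA)] at h3
  rw [← h3, ← integral_indicator (hm _ hA)]
  refine integral_congr_ae (Eventually.of_forall fun ω => ?_)
  by_cases hω : ω ∈ A <;> simp [hω]

lemma key_zero {m0 : MeasurableSpace Ω} (μ : Measure Ω) [IsProbabilityMeasure μ]
    (E : Ω → ℝ) (hE : IsExpOne μ E) (m : MeasurableSpace Ω) (hm : m ≤ m0)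
    (hind : Indep (MeasurableSpace.comap E inferInstance) m μ)
    (J : Ω → ℝ) (hJ : Measurable[m0] J)
    (hJind : Indep (MeasurableSpace.comap J inferInstance)
      (m ⊔ MeasurableSpace.comap E inferInstance) μ)
    (h : ℝ → ℝ) (hh : Measurable h) (hhJ : Integrable (fun ω => h (J ω)) μ)
    (Z : Ω → ℝ) (hZ : Measurable[m] Z) (hZ0 : ∀ ω, 0 ≤ Z ω)
    (B : Set Ω) (hB : MeasurableSet[m] B) :
    ∫ ω in B, ((if E ω ≤ Z ω then h (J ω) else 0)
      - (∫ x, h (J x) ∂μ) * min (E ω) (Z ω)) ∂μ = 0 := by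
  have hEi := exp_integrable μ E hE
  have hZm0 : Measurable[m0] Z := hZ.mono hm le_rfl
  have hEcomap : MeasurableSpace.comap E inferInstance ≤ m0 := hE.1.comap_le
  have hsup : m ⊔ MeasurableSpace.comap E inferInstance ≤ m0 := sup_le hm hEcomap
  have hD : MeasurableSet[m ⊔ MeasurableSpace.comap E inferInstance] {ω | E ω ≤ Z ω} := by
    refine @measurableSet_le _ _ _ _ _ (m ⊔ MeasurableSpace.comap E inferInstance) _ _ _ _ _ ?_ ?_
    · exact (comap_measurable E).mono le_sup_right le_rfl
    · exact hZ.mono le_sup_left le_rfl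
  have hBs : MeasurableSet[m ⊔ MeasurableSpace.comap E inferInstance] B :=
    (le_sup_left : m ≤ m ⊔ MeasurableSpace.comap E inferInstance) _ hB
  have hDB := hBs.inter hD
  have hD0 : MeasurableSet[m0] {ω | E ω ≤ Z ω} := hsup _ hD
  have hB0 : MeasurableSet[m0] B := hm _ hB
  have hmin : Integrable (fun ω => min (E ω) (Z ω)) μ := by
    refine Integrable.mono' hEi (hE.1.min hZm0).aestronglyMeasurable ?_
    filter_upwards [exp_pos μ E hE] with ω hω
    rw [Real.norm_eq_abs, abs_of_nonneg (le_min hω.le (hZ0 ω))]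
    exact min_le_left _ _
  have g1 : ∀ k : Ω → ℝ, (fun ω => if E ω ≤ Z ω then k ω else 0)
      = {ω | E ω ≤ Z ω}.indicator k := fun k => by
    ext
    simp [Set.indicator]
  have hkey := key_phi m μ E hE hm hind Z hZ hZ0 B hB
  have i1 : Integrable (fun ω => if E ω ≤ Z ω then (1:ℝ) else 0) μ := by
    rw [g1 (fun _ => 1)]
    exact (integrable_const 1).indicator hD0
  have i2 : Integrable (fun ω => if E ω ≤ Z ω then h (J ω) else 0) μ := by
    rw [g1 (fun ω => h (J ω))]
    exact hhJ.indicator hD0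
  rw [integral_sub i1.integrableOn hmin.integrableOn] at hkey
  rw [integral_sub i2.integrableOn (hmin.const_mul _).integrableOn, integral_const_mul,
    g1 (fun ω => h (J ω)), setIntegral_indicator hD0,
    key_J μ J hJ _ hsup hJind h hh _ hDB]
  rw [g1 (fun _ => (1:ℝ)), setIntegral_indicator hD0] at hkey
  rw [← mul_sub, hkey, mul_zero]

/-- In the Cox construction with one jump time and random jump size `J`,
for every measurable `h : ℝ → ℝ` with `h(J)` integrable, the process
`(h(J)·1_{τ ≤ t} − E[h(J)]·Λ_{τ ∧ t})_t` is a `G̃`-martingale. -/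
theorem cox_one_jump_h {m0 : MeasurableSpace Ω} (μ : Measure Ω)
    [IsProbabilityMeasure μ]
    (F : ℝ → MeasurableSpace Ω) (hUC : UsualConditions μ F)
    (lam : ℝ → Ω → ℝ) (hprog : ProgMeas F lam)
    (hnonneg : ∀ s ω, 0 ≤ lam s ω)
    (hfin : ∀ᵐ ω ∂μ, ∀ t : ℝ, IntegrableOn (fun s => lam s ω) (Set.Ioc 0 t) volume)
    (hinf : ∀ᵐ ω ∂μ, Tendsto (fun t => ∫ s in Set.Ioc 0 t, lam s ω) atTop atTop)
    (E : Ω → ℝ) (hE : IsExpOne μ E)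
    (hEindep : Indep (MeasurableSpace.comap E inferInstance) (Finfty F) μ)
    (τ : Ω → ℝ)
    (hτ : ∀ ω, τ ω = sInf {t : ℝ | 0 < t ∧ E ω ≤ ∫ s in Set.Ioc 0 t, lam s ω})
    (J : Ω → ℝ) (hJmeas : Measurable J) (hJint : Integrable J μ)
    (hJnonvanish : μ {ω | J ω ≠ 0} = 1)
    (hJindep : Indep (MeasurableSpace.comap J inferInstance)
      (Finfty F ⊔ MeasurableSpace.comap E inferInstance) μ)
    (Gtil : ℝ → MeasurableSpace Ω)
    (hGtil : ∀ t : ℝ, Gtil t =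
      rcReg (fun u => F u ⊔ natFilt (fun s ω => if τ ω ≤ s then J ω else 0) u) t)
    (h : ℝ → ℝ) (hh : Measurable h) (hhJ : Integrable (fun ω => h (J ω)) μ) :
    IsMartingale μ Gtil (fun t ω =>
      (if τ ω ≤ t then h (J ω) else 0) -
        (∫ x, h (J x) ∂μ) * ∫ s in Set.Ioc 0 (min (τ ω) t), lam s ω) := by
  obtain ⟨⟨hFmono, hFle⟩, -, hFnull⟩ := hUC
  -- the integrated intensity
  set L : ℝ → Ω → ℝ := fun t ω => ∫ s in Set.Ioc 0 t, lam s ω with hLdef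
  set c : ℝ := ∫ x, h (J x) ∂μ with hc
  have hL0 : ∀ t ω, 0 ≤ L t ω := fun t ω => integral_nonneg fun s => hnonneg s ω
  have hFnull' : ∀ t, 0 ≤ t → ∀ s : Set Ω, μ s = 0 → MeasurableSet[F t] s :=
    fun t ht s hs => hFmono 0 t le_rfl ht s (hFnull s hs)
  have hLm : ∀ t, 0 ≤ t → Measurable[F t] (L t) := fun t ht =>
    @meas_integral Ω (F t) t lam (hprog t ht) (fun _ => t)
      (@measurable_const _ _ _ (F t) t) (fun _ => le_rfl)
  have hFinf : ∀ t, 0 ≤ t → F t ≤ Finfty F := fun t ht =>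
    le_iSup₂_of_le (f := fun t (_ : t ∈ Set.Ici (0:ℝ)) => F t) t ht le_rfl
  have hFinfle : Finfty F ≤ m0 := iSup₂_le fun t _ => hFle t
  have hLm0 : ∀ t, 0 ≤ t → Measurable (L t) := fun t ht => (hLm t ht).mono (hFle t) le_rfl
  -- pathwise facts
  have hpath : ∀ᵐ ω ∂μ, 0 < E ω ∧ Monotone (fun t => L t ω) ∧
      ContinuousOn (fun t => L t ω) (Set.Ici 0) ∧
      (∀ t : ℝ, 0 ≤ t → (τ ω ≤ t ↔ E ω ≤ L t ω)) ∧
      ∀ t : ℝ, L (min (τ ω) t) ω = min (E ω) (L t ω) := by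
    filter_upwards [exp_pos μ E hE, hfin, hinf] with ω h1 h2 h3
    obtain ⟨p1, p2⟩ := prim_aux (fun s => lam s ω) (fun s => hnonneg s ω) h2
    obtain ⟨p3, p4⟩ := hit_aux (fun t => L t ω) p1 p2 (by simp [hLdef]) h3 (E ω) h1 (τ ω) (hτ ω)
    exact ⟨h1, p1, p2, p3, p4⟩
  have hJne : ∀ᵐ ω ∂μ, J ω ≠ 0 := by
    have hms : MeasurableSet {ω | J ω ≠ 0} :=
      (hJmeas (measurableSet_singleton 0)).compl
    exact (prob_compl_eq_zero_iff hms).2 hJnonvanish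
  have hτ0 : ∀ ω, 0 ≤ τ ω := fun ω => by
    rw [hτ ω]
    exact Real.sInf_nonneg fun t ht => ht.1.le
  -- the convenient version of the process
  set M : ℝ → Ω → ℝ := fun t ω => (if τ ω ≤ t then h (J ω) else 0) - c * L (min (τ ω) t) ω
    with hMdef
  set N : ℝ → Ω → ℝ := fun t ω => (if E ω ≤ L t ω then h (J ω) else 0) - c * min (E ω) (L t ω)
    with hNdef
  change IsMartingale μ Gtil M
  have hMN : ∀ t, 0 ≤ t → M t =ᵐ[μ] N t := fun t ht => by
    filter_upwards [hpath] with ω hω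
    simp only [hMdef, hNdef, hω.2.2.2.1 t ht, hω.2.2.2.2 t]
  have hEi := exp_integrable μ E hE
  have hNm : ∀ t, 0 ≤ t → Measurable (N t) := fun t ht =>
    (Measurable.ite (measurableSet_le hE.1 (hLm0 t ht)) (hh.comp hJmeas) measurable_const).sub
      ((hE.1.min (hLm0 t ht)).const_mul c)
  have hNbd : ∀ t, ∀ᵐ ω ∂μ, ‖N t ω‖ ≤ |h (J ω)| + |c| * E ω := fun t => by
    filter_upwards [hpath] with ω hω
    have h1 : 0 ≤ min (E ω) (L t ω) := le_min hω.1.le (hL0 t ω)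
    have h2 : |c * min (E ω) (L t ω)| ≤ |c| * E ω := by
      rw [abs_mul, abs_of_nonneg h1]
      exact mul_le_mul_of_nonneg_left (min_le_left _ _) (abs_nonneg c)
    have h3 : |if E ω ≤ L t ω then h (J ω) else 0| ≤ |h (J ω)| := by
      split_ifs
      · exact le_rfl
      · simp
    rw [Real.norm_eq_abs]
    exact (abs_sub _ _).trans (add_le_add h3 h2)
  have hbdint : Integrable (fun ω => |h (J ω)| + |c| * E ω) μ := hhJ.abs.add (hEi.const_mul _)
  have hNint : ∀ t, 0 ≤ t → Integrable (N t) μ := fun t ht =>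
    hbdint.mono' (hNm t ht).aestronglyMeasurable (hNbd t)
  have hMint : ∀ t, 0 ≤ t → Integrable (M t) μ := fun t ht =>
    (integrable_congr (hMN t ht)).2 (hNint t ht)
  -- the unregularized filtration
  set Y : ℝ → Ω → ℝ := fun s ω => if τ ω ≤ s then J ω else 0 with hYdef
  set G : ℝ → MeasurableSpace Ω := fun u => F u ⊔ natFilt Y u with hGdef
  have hGmono : ∀ s t, 0 ≤ s → s ≤ t → G s ≤ G t := fun s t hs hst =>
    sup_le_sup (hFmono s t hs hst)
      (biSup_mono fun r hr => ⟨hr.1, hr.2.trans hst⟩)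
  have hGtil_ge : ∀ t, 0 ≤ t → G t ≤ Gtil t := fun t ht => by
    rw [hGtil t]
    exact le_iInf₂ fun s hs => hGmono t s ht (le_of_lt hs)
  have hGtil_le : ∀ t u, t < u → Gtil t ≤ G u := fun t u htu => by
    rw [hGtil t]
    exact iInf₂_le u htu
  have hGnull : ∀ t, 0 ≤ t → ∀ s : Set Ω, μ s = 0 → MeasurableSet[G t] s := fun t ht s hs =>
    (le_sup_left : F t ≤ G t) s (hFnull' t ht s hs)
  have hYm : ∀ s t, 0 ≤ s → s ≤ t → Measurable[G t] (Y s) := fun s t hs hst => by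
    refine (comap_measurable (Y s)).mono ?_ le_rfl
    refine le_trans ?_ (le_sup_right : natFilt Y t ≤ G t)
    exact le_iSup₂_of_le
      (f := fun s (_ : s ∈ Set.Icc (0:ℝ) t) => MeasurableSpace.comap (Y s) inferInstance)
      s ⟨hs, hst⟩ le_rfl
  have hτset : ∀ s t, 0 ≤ s → s ≤ t → MeasurableSet[G t] {ω | τ ω ≤ s} := fun s t hs hst => by
    refine measSet_of_ae μ (G t) (hGnull t (hs.trans hst)) (A := Y s ⁻¹' {0}ᶜ)
      (hYm s t hs hst (measurableSet_singleton 0).compl) ?_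
    filter_upwards [hJne] with ω hω
    by_cases h : τ ω ≤ s <;> simp [hYdef, h, hω]
  have hMmeasG : ∀ t, 0 ≤ t → Measurable[G t] (M t) := fun t ht => by
    have hT : Measurable[G t] (fun ω => min (τ ω) t) := by
      refine meas_Iic (m := G t) fun a => ?_
      rcases lt_or_ge a t with hat | hat
      · rcases lt_or_ge a 0 with ha | ha
        · have : (fun ω => min (τ ω) t) ⁻¹' Set.Iic a = ∅ := by
            ext ω
            have := hτ0 ω
            simp only [mem_preimage, mem_Iic, min_le_iff, mem_empty_iff_false, iff_false, not_or,
              not_le]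
            exact ⟨by linarith, hat⟩
          rw [this]
          exact @MeasurableSet.empty _ (G t)
        · have : (fun ω => min (τ ω) t) ⁻¹' Set.Iic a = {ω | τ ω ≤ a} := by
            ext ω
            simp [not_le.2 hat]
          rw [this]
          exact hτset a t ha hat.le
      · have : (fun ω => min (τ ω) t) ⁻¹' Set.Iic a = Set.univ := by
          ext ω
          simp [hat]
        rw [this]
        exact @MeasurableSet.univ _ (G t)
    have hlamG : Measurable[MeasurableSpace.prod inferInstance (G t)]
        (fun p : Set.Icc (0:ℝ) t × Ω => lam p.1 p.2) := by
      refine (hprog t ht).mono ?_ le_rfl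
      exact sup_le_sup le_rfl (MeasurableSpace.comap_mono le_sup_left)
    have h1 : Measurable[G t] (fun ω => L (min (τ ω) t) ω) :=
      @meas_integral Ω (G t) t lam hlamG (fun ω => min (τ ω) t) hT (fun ω => min_le_right _ _)
    have h2 : Measurable[G t] (fun ω => if τ ω ≤ t then h (J ω) else 0) := by
      have h3 : Measurable[G t] (fun ω => if Y t ω = 0 then 0 else h (Y t ω)) := by
        have h4 : Measurable (fun y : ℝ => if y = 0 then 0 else h y) :=
          Measurable.ite (measurableSet_singleton 0) measurable_const hh
        exact h4.comp (hYm t t ht le_rfl)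
      refine meas_of_ae μ (G t) (hGnull t ht) h3 ?_
      filter_upwards [hJne] with ω hω
      by_cases h : τ ω ≤ t <;> simp [hYdef, h, hω]
    exact meas_comb (m := G t) c h2 h1
  have hMmeas : ∀ t, 0 ≤ t → Measurable[Gtil t] (M t) := fun t ht =>
    (hMmeasG t ht).mono (hGtil_ge t ht) le_rfl
  have hτm0 : ∀ s, 0 ≤ s → MeasurableSet {ω | E ω ≤ L s ω} := fun s hs =>
    measurableSet_le hE.1 (hLm0 s hs)
  -- all μ-null sets are measurable
  have hnull0 : ∀ s : Set Ω, μ s = 0 → MeasurableSet s := fun s hs => hFle 0 s (hFnull s hs)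
  have hYm0 : ∀ s, 0 ≤ s → Measurable (Y s) := fun s hs => by
    have hset : MeasurableSet {ω | τ ω ≤ s} := by
      refine measSet_of_ae μ m0 hnull0 (hτm0 s hs) ?_
      filter_upwards [hpath] with ω hω
      exact (hω.2.2.2.1 s hs).symm
    exact Measurable.ite hset hJmeas measurable_const
  have hGle : ∀ t, G t ≤ m0 := fun t =>
    sup_le (hFle t) (iSup₂_le fun s hs => (hYm0 s hs.1).comap_le)
  have hGtille : ∀ t, Gtil t ≤ m0 := fun t =>
    (hGtil_le t (t + 1) (by linarith)).trans (hGle _)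
  -- the basic identity
  have hbase : ∀ u t, 0 ≤ u → u ≤ t → ∀ A, MeasurableSet[G u] A →
      ∫ ω in A, N u ω ∂μ = ∫ ω in A, N t ω ∂μ := by
    intro u t hu hut A hA
    have ht := hu.trans hut
    obtain ⟨B, hB, hAB⟩ := trace_aux (F u) Y u {ω | u < τ ω}
      (fun s hs ω hω => by
        have h1 : ¬ τ ω ≤ s := not_le.2 (lt_of_le_of_lt hs hω)
        simp [hYdef, h1]) A hA
    have hA0 : MeasurableSet A := hGle u A hA
    have hB0 : MeasurableSet B := hFle u B hB
    have hzero : ∀ r, 0 ≤ r → ∫ ω in B, N r ω ∂μ = 0 := fun r hr =>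
      key_zero μ E hE (Finfty F) hFinfle hEindep J hJmeas hJindep h hh hhJ (L r)
        ((hLm r hr).mono (hFinf r hr) le_rfl) (hL0 r) B (hFinf u hu B hB)
    have hdiff : ∫ ω in A, (N t ω - N u ω) ∂μ = ∫ ω in B, (N t ω - N u ω) ∂μ := by
      rw [← integral_indicator hA0, ← integral_indicator hB0]
      refine integral_congr_ae ?_
      filter_upwards [hpath] with ω hω
      by_cases hτu : u < τ ω
      · have := hAB ω hτu
        by_cases hωA : ω ∈ A
        · simp [hωA, this.1 hωA]
        · have hωB : ω ∉ B := fun hb => hωA (this.2 hb)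
          simp [hωA, hωB]
      · have h1 : E ω ≤ L u ω := (hω.2.2.2.1 u hu).1 (not_lt.1 hτu)
        have h2 : E ω ≤ L t ω := h1.trans (hω.2.1 hut)
        have h3 : N t ω - N u ω = 0 := by
          simp only [hNdef, if_pos h1, if_pos h2, min_eq_left h1, min_eq_left h2, sub_self]
        simp [Set.indicator, h3]
    rw [integral_sub (hNint t ht).integrableOn (hNint u hu).integrableOn,
      integral_sub (hNint t ht).integrableOn (hNint u hu).integrableOn, hzero t ht, hzero u hu]
      at hdiff
    linarith
  refine ⟨hMint, hMmeas, fun s t hs hst => ?_⟩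
  have ht := hs.trans hst
  symm
  refine ae_eq_condExp_of_forall_setIntegral_eq (hGtille s) (hMint t ht)
    (fun A _ _ => (hMint s hs).integrableOn) (fun A hA _ => ?_)
    (hMmeas s hs).stronglyMeasurable.aestronglyMeasurable
  rw [setIntegral_congr_ae (g := N s) (hGtille s A hA) ((hMN s hs).mono fun ω h _ => h),
    setIntegral_congr_ae (g := N t) (hGtille s A hA) ((hMN t ht).mono fun ω h _ => h)]
  rcases eq_or_lt_of_le hst with rfl | hlt
  · rfl
  have hev : ∀ᶠ u in 𝓝[>] s, s < u ∧ u ≤ t := by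
    filter_upwards [self_mem_nhdsWithin, Ioc_mem_nhdsGT hlt] with u h1 h2
    exact h2
  have hlim : Tendsto (fun u => ∫ ω in A, N u ω ∂μ) (𝓝[>] s) (𝓝 (∫ ω in A, N s ω ∂μ)) := by
    refine tendsto_integral_filter_of_dominated_convergence
      (fun ω => |h (J ω)| + |c| * E ω) ?_ ?_ hbdint.integrableOn ?_
    · filter_upwards [hev] with u hu
      exact (hNm u (hs.trans hu.1.le)).aestronglyMeasurable
    · exact Eventually.of_forall fun u => ae_restrict_of_ae (hNbd u)
    · refine ae_restrict_of_ae ?_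
      filter_upwards [hpath] with ω hω
      have hLt : Tendsto (fun u => L u ω) (𝓝[>] s) (𝓝 (L s ω)) :=
        (hω.2.2.1 s hs).mono_left (nhdsWithin_mono s fun x hx => hs.trans (le_of_lt hx))
      refine Tendsto.sub ?_ ((tendsto_const_nhds.min hLt).const_mul c)
      refine tendsto_const_nhds.congr' ?_
      rcases le_or_gt (E ω) (L s ω) with hle | hgt
      · filter_upwards [self_mem_nhdsWithin] with u hu
        rw [if_pos hle, if_pos (hle.trans (hω.2.1 (le_of_lt hu)))]
      · filter_upwards [hLt.eventually_lt_const hgt] with u hu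
        rw [if_neg (not_le.2 hgt), if_neg (not_le.2 hu)]
  have hconst : Tendsto (fun u => ∫ ω in A, N u ω ∂μ) (𝓝[>] s) (𝓝 (∫ ω in A, N t ω ∂μ)) := by
    refine tendsto_const_nhds.congr' ?_
    filter_upwards [hev] with u hu
    exact (hbase u t (hs.trans hu.1.le) hu.2 A (hGtil_le s u hu.1 A hA)).symm
  exact tendsto_nhds_unique hlim hconst

end InvMarkovJump
end
end

section
/- Under the setting of the Cox construction with infinitely many jumps — (λ^k)_{k≥1} measurable processes with c ≤ λ^k ≤ C (P ⊗ dt)-a.e. for constants 0 < c < C, (E_k)_{k≥1} i.i.d. Exp(1), (J_k)_{k≥1} i.i.d. integrable and non-vanishing, with 𝓕_∞, (E_k), (J_k) independent; τ_0 := 0, τ_k := inf{t > τ_{k-1} : ∫_{τ_{k-1}}^t λ^k_s ds ≥ E_k}; each λ^k progressively measurable with respect to 𝔾^{k-1}, and 𝔾 the right-continuous regularization of (𝓕_t ∨ ⋁_{i=1}^∞ σ(J_i·1_{{τ_i ≤ s}} : s ≤ t))_{t≥0} — the following holds: for any measurable function h : ℝ → ℝ such that h(J_1) is integrable, the process M^h_t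 := Σ_{k=1}^∞ h(J_k)·1_{{τ_k ≤ t}} − E[h(J_1)]·∫_0^t Σ_{k=1}^∞ 1_{{τ_{k-1} < s ≤ τ_k}} λ^k_s ds, t ≥ 0, is a 𝔾-martingale. -/
open MeasureTheory ProbabilityTheory Filter Set
open scoped ENNReal Topology

noncomputable section

namespace InvMarkovJump

variable {Ω : Type*}

section det
variable {f : ℝ → ℝ} {c C : ℝ}

theorem det_int (hm : AEStronglyMeasurable f (volume.restrict (Ici (0:ℝ))))
    (hb : ∀ᵐ s ∂(volume.restrict (Ici (0:ℝ))), c ≤ f s ∧ f s ≤ C) {x : ℝ} (hx : 0 ≤ x) (y : ℝ) :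
    IntegrableOn f (Ioc x y) := by
  have hsub : Ioc x y ⊆ Ici (0:ℝ) := fun s hs => le_trans hx hs.1.le
  refine IntegrableOn.of_bound (C := max |c| |C|) (by simp) (hm.mono_measure
    (Measure.restrict_mono hsub le_rfl)) ?_
  filter_upwards [ae_mono (Measure.restrict_mono hsub le_rfl) hb] with s hs
  exact abs_le_max_abs_abs hs.1 hs.2

theorem det_bd (hm : AEStronglyMeasurable f (volume.restrict (Ici (0:ℝ))))
    (hb : ∀ᵐ s ∂(volume.restrict (Ici (0:ℝ))), c ≤ f s ∧ f s ≤ C) {x y : ℝ} (hx : 0 ≤ x)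
    (hxy : x ≤ y) :
    c * (y - x) ≤ ∫ s in Ioc x y, f s ∧ ∫ s in Ioc x y, f s ≤ C * (y - x) := by
  have hsub : Ioc x y ⊆ Ici (0:ℝ) := fun s hs => le_trans hx hs.1.le
  have hi := det_int hm hb hx y
  have hb' := ae_mono (Measure.restrict_mono hsub le_rfl) hb
  have hconst : ∀ d : ℝ, ∫ s in Ioc x y, d = d * (y - x) := by
    intro d
    rw [setIntegral_const, Real.volume_real_Ioc_of_le hxy, smul_eq_mul, mul_comm]
  constructor
  · rw [← hconst c]
    apply integral_mono_ae (integrable_const _) hi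
    filter_upwards [hb'] with s hs using hs.1
  · rw [← hconst C]
    apply integral_mono_ae hi (integrable_const _)
    filter_upwards [hb'] with s hs using hs.2

theorem det_add (hm : AEStronglyMeasurable f (volume.restrict (Ici (0:ℝ))))
    (hb : ∀ᵐ s ∂(volume.restrict (Ici (0:ℝ))), c ≤ f s ∧ f s ≤ C) {x y z : ℝ} (hx : 0 ≤ x)
    (hxy : x ≤ y) (hyz : y ≤ z) :
    ∫ s in Ioc x z, f s = (∫ s in Ioc x y, f s) + ∫ s in Ioc y z, f s := by
  rw [← Ioc_union_Ioc_eq_Ioc hxy hyz]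
  exact setIntegral_union (Ioc_disjoint_Ioc_of_le le_rfl) measurableSet_Ioc
    (det_int hm hb hx y) (det_int hm hb (hx.trans hxy) z)

/-- deterministic hitting time lemma -/
theorem det_main (hc : 0 < c) (hcC : c < C)
    (hm : AEStronglyMeasurable f (volume.restrict (Ici (0:ℝ))))
    (hb : ∀ᵐ s ∂(volume.restrict (Ici (0:ℝ))), c ≤ f s ∧ f s ≤ C) {a e T : ℝ} (ha : 0 ≤ a)
    (he : 0 < e) (hT : T = sInf {t : ℝ | a < t ∧ e ≤ ∫ s in Ioc a t, f s}) :
    a < T ∧ (∫ s in Ioc a T, f s = e) ∧ (∀ t, T ≤ t ↔ e ≤ ∫ s in Ioc a t, f s) := by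
  have hC : 0 < C := hc.trans hcC
  obtain ⟨T0, hT0a, hT0⟩ : ∃ T0, a ≤ T0 ∧ ∫ s in Ioc a T0, f s = e := by
    have hcont : ContinuousOn (fun t => ∫ s in Ioc a t, f s) (Icc a (a + e / c)) := by
      have := (det_int hm hb ha (a + e / c))
      exact intervalIntegral.continuousOn_primitive ((integrableOn_Icc_iff_integrableOn_Ioc (by simp)).2 this)
    have h1 := intermediate_value_Icc (by have := div_pos he hc; linarith) hcont
    have h2 : e ∈ Icc (∫ s in Ioc a a, f s) (∫ s in Ioc a (a + e / c), f s) := by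
      constructor
      · simp [he.le]
      · have := (det_bd hm hb ha (y := a + e / c) (by have := div_pos he hc; linarith)).1
        have h3 : c * (a + e / c - a) = e := by field_simp; ring
        linarith
    obtain ⟨T0, h3, h4⟩ := h1 h2
    exact ⟨T0, h3.1, h4⟩
  have hlt : a < T0 := by
    rcases hT0a.lt_or_eq with h | h
    · exact h
    · subst h; simp at hT0; linarith
  have hiff : ∀ t, T0 ≤ t ↔ e ≤ ∫ s in Ioc a t, f s := by
    intro t
    constructor
    · intro h
      rw [det_add hm hb ha hT0a h, hT0]
      have := (det_bd hm hb (ha.trans hT0a) h).1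
      have := mul_nonneg hc.le (sub_nonneg.2 h)
      linarith
    · intro h
      by_contra! h'
      rcases le_total t a with h1 | h1
      · rw [Ioc_eq_empty (by simpa using h1)] at h
        simp at h; linarith
      · have h2 := det_add hm hb ha h1 h'.le
        have := (det_bd hm hb (ha.trans h1) h'.le).1
        have := mul_pos hc (sub_pos.2 h')
        linarith
  have hset : {t : ℝ | a < t ∧ e ≤ ∫ s in Ioc a t, f s} = Ici T0 := by
    ext t
    simp only [mem_ofPred_eq, mem_Ici, ← hiff]
    exact ⟨fun h => h.2, fun h => ⟨hlt.trans_le h, h⟩⟩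
  rw [hset, csInf_Ici] at hT
  subst hT
  exact ⟨hlt, hT0, hiff⟩

theorem det_int2 (hc : 0 < c) (hcC : c < C)
    (hm : AEStronglyMeasurable f (volume.restrict (Ici (0:ℝ))))
    (hb : ∀ᵐ s ∂(volume.restrict (Ici (0:ℝ))), c ≤ f s ∧ f s ≤ C) {a e T : ℝ} (ha : 0 ≤ a)
    (he : 0 < e) (hT : T = sInf {t : ℝ | a < t ∧ e ≤ ∫ s in Ioc a t, f s}) (t : ℝ) (ht : 0 ≤ t) :
    (IntegrableOn (fun s => if a < s ∧ s ≤ T then f s else 0) (Ioc 0 t)) ∧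
    (∫ s in Ioc 0 t, (if a < s ∧ s ≤ T then f s else 0) = ∫ s in Ioc (min a t) (min T t), f s) ∧
    (∫ s in Ioc 0 t, ‖(if a < s ∧ s ≤ T then f s else 0)‖
      = ∫ s in Ioc 0 t, (if a < s ∧ s ≤ T then f s else 0)) ∧
    (∫ s in Ioc (min a t) (min T t), f s = min e (∫ s in Ioc a t, f s)) ∧
    (∫ s in Ioc (min a t) (min T t), f s ≤ C * (min T t - min a t)) ∧
    (0 ≤ ∫ s in Ioc a t, f s) ∧ (∫ s in Ioc a t, f s ≤ C * t) := by
  have hC : 0 < C := hc.trans hcC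
  obtain ⟨h1, h2, h3⟩ := det_main hc hcC hm hb ha he hT
  have hind : (fun s => if a < s ∧ s ≤ T then f s else 0) = (Ioc a T).indicator f := by
    ext s; simp [indicator, mem_Ioc]
  have hset : Ioc 0 t ∩ Ioc a T = Ioc (min a t) (min T t) := by
    ext s
    simp only [mem_inter_iff, mem_Ioc, min_lt_iff, le_min_iff]
    constructor
    · rintro ⟨⟨_, h⟩, h', h''⟩; exact ⟨Or.inl h', h'', h⟩
    · rintro ⟨h | h, h', h''⟩
      · exact ⟨⟨ha.trans_lt h, h''⟩, h, h'⟩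
      · linarith
  have hmin0 : 0 ≤ min a t := le_min ha ht
  have hmm : min a t ≤ min T t := min_le_min_right _ h1.le
  have hnn : 0 ≤ ∫ s in Ioc a t, f s := by
    rcases le_total a t with h | h
    · have := (det_bd hm hb ha h).1
      have := mul_nonneg hc.le (sub_nonneg.2 h)
      linarith
    · rw [Ioc_eq_empty (by simpa using h)]; simp
  refine ⟨?_, ?_, ?_, ?_, (det_bd hm hb hmin0 hmm).2, hnn, ?_⟩
  · rw [hind]
    exact (det_int hm hb le_rfl t).indicator measurableSet_Ioc
  · rw [hind, setIntegral_indicator measurableSet_Ioc, hset]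
  · apply integral_congr_ae
    have hsub : Ioc 0 t ⊆ Ici (0:ℝ) := fun s hs => hs.1.le
    filter_upwards [ae_mono (Measure.restrict_mono hsub le_rfl) hb] with s hs
    rw [Real.norm_of_nonneg]
    split_ifs
    · linarith [hs.1]
    · exact le_rfl
  · rcases le_total a t with h | h
    · rw [min_eq_left h]
      rcases le_total T t with h' | h'
      · rw [min_eq_left h', h2, min_eq_left ((h3 t).1 h')]
      · rw [min_eq_right h', min_eq_right]
        rw [← h2, det_add hm hb ha h h']
        have := (det_bd hm hb (ha.trans h) h').1
        have := mul_nonneg hc.le (sub_nonneg.2 h')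
        linarith
    · rw [min_eq_right h, min_eq_right (h.trans h1.le), Ioc_eq_empty (lt_irrefl _),
        Ioc_eq_empty (by simpa using h)]
      simp [he.le]
  · rcases le_total a t with h | h
    · have := (det_bd hm hb ha h).2
      nlinarith [mul_nonneg hC.le ha]
    · rw [Ioc_eq_empty (by simpa using h)]; simp; positivity
end det

theorem exp_pos_ae {m0 : MeasurableSpace Ω} {μ : Measure Ω} [IsProbabilityMeasure μ]
    {E : Ω → ℝ} (hE : IsExpOne μ E) : ∀ᵐ ω ∂μ, 0 < E ω := by
  have h := hE.2 0 le_rfl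
  simp only [neg_zero, Real.exp_zero, ENNReal.ofReal_one] at h
  exact (prob_compl_eq_zero_iff (measurableSet_lt measurable_const hE.1)).2 h

theorem exp_min {m0 : MeasurableSpace Ω} {μ : Measure Ω} [IsProbabilityMeasure μ]
    {E : Ω → ℝ} (hE : IsExpOne μ E) {y : ℝ} (hy : 0 ≤ y) :
    ∫ ω, min (E ω) y ∂μ = 1 - Real.exp (-y) := by
  have hnn : 0 ≤ᵐ[μ] fun ω => min (E ω) y := by
    filter_upwards [exp_pos_ae hE] with ω hω using le_min hω.le hy
  have hm : Measurable fun ω => min (E ω) y := hE.1.min measurable_const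
  have h1 : ∫⁻ t in Ioi 0, μ {a : Ω | t < min (E a) y}
      = ∫⁻ t in Ioc 0 y, ENNReal.ofReal (Real.exp (-t)) := by
    rw [← lintegral_indicator measurableSet_Ioi, ← lintegral_indicator measurableSet_Ioc]
    apply lintegral_congr_ae
    have : ∀ᵐ t : ℝ, t ≠ y := by simp [ae_iff]
    filter_upwards [this] with t hty
    by_cases ht : 0 < t
    · by_cases hty' : t < y
      · rw [indicator_of_mem (by exact ht), indicator_of_mem (by exact ⟨ht, hty'.le⟩),
          ← hE.2 t ht.le]
        congr 1; ext ω; simp [hty']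
      · rw [indicator_of_mem (by exact ht), indicator_of_notMem (by
          intro h; exact hty' (lt_of_le_of_ne h.2 hty))]
        simp [hty']
    · rw [indicator_of_notMem (by exact ht), indicator_of_notMem (by intro h; exact ht h.1)]
  have h3 : ∫ t in Ioc 0 y, Real.exp (-t) = 1 - Real.exp (-y) := by
    rw [← intervalIntegral.integral_of_le hy]
    rw [intervalIntegral.integral_comp_neg (fun x => Real.exp x)]
    simp
  rw [integral_eq_lintegral_of_nonneg_ae hnn hm.aestronglyMeasurable,
    lintegral_eq_lintegral_meas_lt μ hnn hm.aemeasurable, h1, ← h3,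
    integral_eq_lintegral_of_nonneg_ae]
  · exact Eventually.of_forall fun t => (Real.exp_pos _).le
  · exact (by fun_prop : Measurable fun t : ℝ => Real.exp (-t)).aestronglyMeasurable

theorem exp_cdf {m0 : MeasurableSpace Ω} {μ : Measure Ω} [IsProbabilityMeasure μ]
    {E : Ω → ℝ} (hE : IsExpOne μ E) {y : ℝ} (hy : 0 ≤ y) :
    ∫ ω, (if E ω ≤ y then (1:ℝ) else 0) ∂μ = 1 - Real.exp (-y) := by
  have h : (fun ω => if E ω ≤ y then (1:ℝ) else 0) = {ω | y < E ω}ᶜ.indicator 1 := by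
    ext ω; by_cases h : E ω ≤ y <;> simp [indicator, h]
  have hm : MeasurableSet {ω | y < E ω} := measurableSet_lt measurable_const hE.1
  rw [h, integral_indicator_one hm.compl, probReal_compl_eq_one_sub hm, measureReal_def, hE.2 y hy,
    ENNReal.toReal_ofReal (Real.exp_pos _).le]

/-- key identity -/
theorem key_identity {K m0 : MeasurableSpace Ω} {μ : Measure Ω} [IsProbabilityMeasure μ]
    {E J : Ω → ℝ} (hE : IsExpOne μ E) (hJ : Measurable J) (hEJ : IndepFun E J μ)
    (hK : K ≤ m0)
    (hKW : Indep K (MeasurableSpace.comap (fun ω => (E ω, J ω)) inferInstance) μ)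
    {h : ℝ → ℝ} (hh : Measurable h) (hint : Integrable (fun ω => h (J ω)) μ)
    {Y : Ω → ℝ} (hY : Measurable[K] Y) (hY0 : ∀ᵐ ω ∂μ, 0 ≤ Y ω) {D : ℝ} (hYD : ∀ᵐ ω ∂μ, Y ω ≤ D)
    {B : Set Ω} (hB : MeasurableSet[K] B) :
    ∫ ω in B, ((if E ω ≤ Y ω then h (J ω) else 0) - (∫ x, h (J x) ∂μ) * min (E ω) (Y ω)) ∂μ = 0 := by
  set m := ∫ x, h (J x) ∂μ with hm
  have hYm : Measurable Y := hY.mono hK le_rfl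
  have hBm : MeasurableSet B := hK _ hB
  let b : Ω → ℝ := B.indicator (fun _ => 1)
  have hbK : Measurable[K] b := by
    refine Measurable.indicator ?_ hB
    exact measurable_const
  have hb : Measurable b := hbK.mono hK le_rfl
  let Z : Ω → ℝ × ℝ := fun ω => (b ω, Y ω)
  let W : Ω → ℝ × ℝ := fun ω => (E ω, J ω)
  have hZ : Measurable Z := hb.prodMk hYm
  have hW : Measurable W := hE.1.prodMk hJ
  have hZK : Measurable[K] Z := by
    refine Measurable.prodMk hbK hY
  have hind : IndepFun Z W μ := by
    rw [IndepFun_iff_Indep]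
    exact indep_of_indep_of_le_left hKW (Measurable.comap_le hZK)
  let f : (ℝ × ℝ) × (ℝ × ℝ) → ℝ := fun p =>
    p.1.1 * ((if p.2.1 ≤ p.1.2 then h p.2.2 else 0) - m * min p.2.1 p.1.2)
  have hf : Measurable f := by
    have : MeasurableSet {p : (ℝ × ℝ) × (ℝ × ℝ) | p.2.1 ≤ p.1.2} :=
      measurableSet_le (by fun_prop) (by fun_prop)
    have h2 : Measurable fun p : (ℝ × ℝ) × (ℝ × ℝ) => h p.2.2 := hh.comp (by fun_prop)
    exact (by fun_prop : Measurable fun p : (ℝ × ℝ) × (ℝ × ℝ) => p.1.1).mul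
      ((Measurable.ite this h2 measurable_const).sub (by fun_prop))
  have hmap : μ.map (fun ω => (Z ω, W ω)) = (μ.map Z).prod (μ.map W) :=
    (indepFun_iff_map_prod_eq_prod_map_map hZ.aemeasurable hW.aemeasurable).1 hind
  have hfint0 : Integrable (fun ω => f (Z ω, W ω)) μ := by
    refine Integrable.mono' (g := fun ω => |h (J ω)| + |m| * |D|)
      (hint.abs.add (integrable_const _)) (hf.comp (hZ.prodMk hW)).aestronglyMeasurable ?_
    filter_upwards [hY0, hYD, exp_pos_ae hE] with ω h0 h1 h2
    have e1 : |b ω| ≤ 1 := by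
      by_cases hω : ω ∈ B <;> simp [b, hω]
    have e2 : |(if E ω ≤ Y ω then h (J ω) else 0)| ≤ |h (J ω)| := by
      split_ifs <;> simp
    have e3 : |min (E ω) (Y ω)| ≤ |D| := by
      rw [abs_of_nonneg (le_min h2.le h0), abs_of_nonneg (h0.trans h1)]
      exact (min_le_right _ _).trans h1
    simp only [f, Z, W, Real.norm_eq_abs]
    rw [abs_mul]
    calc _ ≤ 1 * |(if E ω ≤ Y ω then h (J ω) else 0) - m * min (E ω) (Y ω)| := by gcongr
      _ ≤ |(if E ω ≤ Y ω then h (J ω) else 0)| + |m * min (E ω) (Y ω)| := by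
        rw [one_mul]; exact abs_sub _ _
      _ ≤ _ := by rw [abs_mul]; gcongr
  have hfint : Integrable f ((μ.map Z).prod (μ.map W)) := by
    rw [← hmap]
    exact (integrable_map_measure hf.aestronglyMeasurable (hZ.prodMk hW).aemeasurable).2 hfint0
  have hinner : ∀ z : ℝ × ℝ, 0 ≤ z.2 → ∫ w, f (z, w) ∂(μ.map W) = 0 := by
    intro z hz
    have hm1 : Measurable fun w : ℝ × ℝ => f (z, w) := hf.comp measurable_prodMk_left
    rw [integral_map hW.aemeasurable hm1.aestronglyMeasurable]
    simp only [f, W]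
    rw [integral_const_mul]
    have hiE : Integrable (fun ω => if E ω ≤ z.2 then (1:ℝ) else 0) μ := by
      refine Integrable.of_bound (Measurable.ite (measurableSet_le hE.1 measurable_const)
        measurable_const measurable_const).aestronglyMeasurable 1 (Eventually.of_forall fun ω => ?_)
      split_ifs <;> simp
    have hsplit : (fun ω => if E ω ≤ z.2 then h (J ω) else 0)
        = (fun ω => if E ω ≤ z.2 then (1:ℝ) else 0) * (fun ω => h (J ω)) := by
      ext ω; simp
    have hind2 : IndepFun (fun ω => if E ω ≤ z.2 then (1:ℝ) else 0) (fun ω => h (J ω)) μ :=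
      hEJ.comp (φ := fun x => if x ≤ z.2 then (1:ℝ) else 0) (ψ := h)
        (Measurable.ite measurableSet_Iic measurable_const measurable_const) hh
    have hi1 : Integrable (fun ω => if E ω ≤ z.2 then h (J ω) else 0) μ := by
      rw [hsplit]; exact hind2.integrable_mul hiE hint
    have hi2 : Integrable (fun ω => min (E ω) z.2) μ := by
      refine Integrable.of_bound (hE.1.min measurable_const).aestronglyMeasurable z.2 ?_
      filter_upwards [exp_pos_ae hE] with ω hω
      rw [Real.norm_of_nonneg (le_min hω.le hz)]
      exact min_le_right _ _
    rw [integral_sub hi1 (hi2.const_mul m), integral_const_mul, exp_min hE hz, hsplit]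
    have := hind2.integral_mul_eq_mul_integral hiE.1 hint.1
    rw [this, exp_cdf hE hz, ← hm]
    ring
  have hlhs : ∫ ω in B, ((if E ω ≤ Y ω then h (J ω) else 0) - m * min (E ω) (Y ω)) ∂μ
      = ∫ ω, f (Z ω, W ω) ∂μ := by
    rw [← integral_indicator hBm]
    congr 1; ext ω
    by_cases hω : ω ∈ B <;> simp [f, Z, W, b, hω]
  rw [hlhs, ← integral_map (f := f) (hZ.prodMk hW).aemeasurable hf.aestronglyMeasurable, hmap,
    integral_prod _ hfint]
  apply integral_eq_zero_of_ae
  have : ∀ᵐ z ∂(μ.map Z), 0 ≤ z.2 :=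
    (ae_map_iff hZ.aemeasurable (measurableSet_le measurable_const measurable_snd)).2 hY0
  filter_upwards [this] with z hz using hinner z hz

theorem meas_setIntegral_Ioc {m : MeasurableSpace Ω} {u : ℝ → Ω → ℝ} {a b : Ω → ℝ}
    (hu : Measurable (fun p : ℝ × Ω => u p.1 p.2)) (ha : Measurable a) (hb : Measurable b) :
    Measurable (fun ω => ∫ s in Ioc (a ω) (b ω), u s ω) := by
  have hS : MeasurableSet {p : Ω × ℝ | a p.1 < p.2 ∧ p.2 ≤ b p.1} :=
    (measurableSet_lt (ha.comp measurable_fst) measurable_snd).inter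
      (measurableSet_le measurable_snd (hb.comp measurable_fst))
  have hg : Measurable ({p : Ω × ℝ | a p.1 < p.2 ∧ p.2 ≤ b p.1}.indicator
      (fun p : Ω × ℝ => u p.2 p.1)) :=
    (hu.comp measurable_swap).indicator hS
  have := hg.stronglyMeasurable.integral_prod_right' (ν := (volume : Measure ℝ))
  convert this.measurable using 2 with ω
  rw [← integral_indicator measurableSet_Ioc]
  rfl

theorem null_meas_set {m0 m : MeasurableSpace Ω} {μ : @Measure Ω m0}
    (hn : ∀ s : Set Ω, μ s = 0 → MeasurableSet[m] s) {A B : Set Ω} (hA : MeasurableSet[m] A)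
    (h : ∀ᵐ ω ∂μ, ω ∈ A ↔ ω ∈ B) : MeasurableSet[m] B := by
  have h1 : B = (A \ {ω | ¬ (ω ∈ A ↔ ω ∈ B)}) ∪ ({ω | ¬ (ω ∈ A ↔ ω ∈ B)} ∩ B) := by
    ext ω; simp only [mem_union, Set.mem_sdiff, mem_ofPred_eq, mem_inter_iff]; tauto
  rw [h1]
  have h0 : μ {ω | ¬ (ω ∈ A ↔ ω ∈ B)} = 0 := h
  exact (hA.diff (hn _ h0)).union (hn _ (measure_mono_null inter_subset_left h0))

theorem null_meas_fun {m0 m : MeasurableSpace Ω} {μ : @Measure Ω m0}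
    (hn : ∀ s : Set Ω, μ s = 0 → MeasurableSet[m] s) {f g : Ω → ℝ} (hf : Measurable[m] f)
    (h : ∀ᵐ ω ∂μ, f ω = g ω) : Measurable[m] g := by
  intro S hS
  refine null_meas_set hn (hf hS) ?_
  filter_upwards [h] with ω hω
  simp [hω]

set_option linter.unusedSectionVars false

/-- the stopped jump process -/
def Yp (τ : ℕ → Ω → ℝ) (J : ℕ → Ω → ℝ) (i : ℕ) (s : ℝ) (ω : Ω) : ℝ :=
  if τ (i + 1) ω ≤ s then J i ω else 0

/-- the independent family of σ-algebras -/
def mi (F : ℝ → MeasurableSpace Ω) (E J : ℕ → Ω → ℝ) : ℕ ⊕ ℕ ⊕ Unit → MeasurableSpace Ω :=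
  fun i => Sum.elim (fun k => MeasurableSpace.comap (E k) inferInstance)
        (Sum.elim (fun k => MeasurableSpace.comap (J k) inferInstance)
          (fun _ => Finfty F)) i

/-- indices before `k` -/
def Sk (k : ℕ) : Set (ℕ ⊕ ℕ ⊕ Unit) :=
  fun i => Sum.elim (fun j => j < k) (Sum.elim (fun j => j < k) (fun _ => True)) i

/-- information before `k`-th jump -/
def Kk (F : ℝ → MeasurableSpace Ω) (E J : ℕ → Ω → ℝ) (k : ℕ) : MeasurableSpace Ω :=
  ⨆ i ∈ Sk k, mi F E J i

/-- bundled hypotheses -/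
structure Cox {m0 : MeasurableSpace Ω} (μ : Measure Ω) (F : ℝ → MeasurableSpace Ω) (c C : ℝ)
    (lam : ℕ → ℝ → Ω → ℝ) (E J τ : ℕ → Ω → ℝ) : Prop where
  hUC : UsualConditions μ F
  hc : 0 < c
  hcC : c < C
  hb : ∀ k : ℕ, ∀ᵐ p ∂(μ.prod (volume.restrict (Set.Ici (0:ℝ)))),
      c ≤ lam k p.2 p.1 ∧ lam k p.2 p.1 ≤ C
  hE : ∀ k, IsExpOne μ (E k)
  hJmeas : ∀ k, Measurable (J k)
  hJnv : ∀ k, μ {ω | J k ω ≠ 0} = 1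
  hindep : iIndep (mi F E J) μ
  hτ0 : ∀ ω, τ 0 ω = 0
  hτ : ∀ (k : ℕ) (ω : Ω), τ (k + 1) ω =
      sInf {t : ℝ | τ k ω < t ∧ E k ω ≤ ∫ s in Set.Ioc (τ k ω) t, lam k s ω}
  hprog : ∀ k : ℕ, ProgMeas (rcReg (fun t => F t ⊔
      ⨆ i ∈ Finset.range k, natFilt (Yp τ J i) t)) (lam k)

theorem prog_joint_t {m : MeasurableSpace Ω} {G : ℝ → MeasurableSpace Ω} {u : ℝ → Ω → ℝ}
    (hu : ProgMeas G u) {t : ℝ} (ht : 0 ≤ t) (hm : G t ≤ m) :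
    Measurable (fun p : ℝ × Ω => u (projIcc 0 t ht p.1) p.2) := by
  have h1 : Measurable (fun p : Set.Icc (0:ℝ) t × Ω => u p.1 p.2) :=
    (hu t ht).mono (sup_le_sup le_rfl (MeasurableSpace.comap_mono hm)) le_rfl
  exact h1.comp (((continuous_projIcc (h := ht)).measurable.comp measurable_fst).prodMk measurable_snd)

theorem prog_joint {m : MeasurableSpace Ω} {G : ℝ → MeasurableSpace Ω} {u : ℝ → Ω → ℝ}
    (hu : ProgMeas G u) (hm : ∀ t, 0 ≤ t → G t ≤ m) :
    Measurable (fun p : ℝ × Ω => u (max p.1 0) p.2) := by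
  refine measurable_of_tendsto_metrizable (f := fun n : ℕ => fun p : ℝ × Ω =>
    u (projIcc 0 (n:ℝ) n.cast_nonneg p.1) p.2) (fun n => prog_joint_t hu _ (hm _ n.cast_nonneg)) ?_
  rw [tendsto_pi_nhds]
  intro p
  apply tendsto_const_nhds.congr'
  obtain ⟨N, hN⟩ := exists_nat_ge (p.1)
  filter_upwards [eventually_ge_atTop N] with n hn
  have : p.1 ≤ n := hN.trans (by exact_mod_cast hn)
  congr 1
  rw [coe_projIcc, min_eq_right this, max_comm]

namespace Cox
variable {m0 : MeasurableSpace Ω} {μ : Measure Ω} [IsProbabilityMeasure μ]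
    {F : ℝ → MeasurableSpace Ω} {c C : ℝ} {lam : ℕ → ℝ → Ω → ℝ} {E J τ : ℕ → Ω → ℝ}

theorem tau_nonneg (H : Cox μ F c C lam E J τ) (k : ℕ) (ω : Ω) : 0 ≤ τ k ω := by
  induction k with
  | zero => rw [H.hτ0]
  | succ k ih =>
    rw [H.hτ]
    exact Real.sInf_nonneg fun t ht => ih.trans ht.1.le

theorem mi_le (H : Cox μ F c C lam E J τ) (i : ℕ ⊕ ℕ ⊕ Unit) : mi F E J i ≤ m0 := by
  rcases i with i | i | i
  · exact (H.hE i).1.comap_le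
  · exact (H.hJmeas i).comap_le
  · exact iSup₂_le fun t _ => H.hUC.1.2 t

theorem K_le (H : Cox μ F c C lam E J τ) (k : ℕ) : Kk F E J k ≤ m0 :=
  iSup₂_le fun i _ => H.mi_le i

theorem K_mono {j k : ℕ} (h : j ≤ k) : Kk F E J j ≤ Kk F E J k := by
  refine biSup_mono ?_
  rintro (i | i | i) hi
  · exact lt_of_lt_of_le hi h
  · exact lt_of_lt_of_le hi h
  · trivial

theorem F_le_K {t : ℝ} (ht : 0 ≤ t) (k : ℕ) : F t ≤ Kk F E J k :=
  le_trans (le_iSup₂_of_le (f := fun t (_ : t ∈ Ici (0:ℝ)) => F t) t ht le_rfl)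
    (le_iSup₂_of_le (f := fun i (_ : i ∈ Sk k) => mi F E J i) (Sum.inr (Sum.inr ())) trivial le_rfl)

theorem E_meas {j k : ℕ} (h : j < k) : Measurable[Kk F E J k] (E j) := by
  rw [measurable_iff_comap_le]
  exact le_iSup₂_of_le (f := fun i (_ : i ∈ Sk k) => mi F E J i) (Sum.inl j) h le_rfl

theorem J_meas {j k : ℕ} (h : j < k) : Measurable[Kk F E J k] (J j) := by
  rw [measurable_iff_comap_le]
  exact le_iSup₂_of_le (f := fun i (_ : i ∈ Sk k) => mi F E J i) (Sum.inr (Sum.inl j)) h le_rfl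

theorem K_null (H : Cox μ F c C lam E J τ) (k : ℕ) (s : Set Ω) (hs : μ s = 0) :
    MeasurableSet[Kk F E J k] s :=
  F_le_K le_rfl k _ (H.hUC.2.2 s hs)

theorem indep_K (H : Cox μ F c C lam E J τ) (k : ℕ) :
    Indep (Kk F E J k) (MeasurableSpace.comap (fun ω => (E k ω, J k ω)) inferInstance) μ := by
  have hd : Disjoint (Sk k) {Sum.inl k, Sum.inr (Sum.inl k)} := by
    rw [Set.disjoint_left]
    rintro i hi (rfl | rfl)
    · exact lt_irrefl k hi
    · exact lt_irrefl k hi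
  have := indep_iSup_of_disjoint H.mi_le H.hindep hd
  refine indep_of_indep_of_le_right this ?_
  have h1 : (MeasurableSpace.comap (fun ω => (E k ω, J k ω)) inferInstance)
      = MeasurableSpace.comap (E k) inferInstance ⊔ MeasurableSpace.comap (J k) inferInstance :=
    MeasurableSpace.comap_prodMk _ _
  rw [h1]
  refine sup_le ?_ ?_
  · exact le_iSup₂_of_le (f := fun i (_ : i ∈ ({Sum.inl k, Sum.inr (Sum.inl k)} : Set (ℕ ⊕ ℕ ⊕ Unit)))
      => mi F E J i) (Sum.inl k) (by simp) le_rfl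
  · exact le_iSup₂_of_le (f := fun i (_ : i ∈ ({Sum.inl k, Sum.inr (Sum.inl k)} : Set (ℕ ⊕ ℕ ⊕ Unit)))
      => mi F E J i) (Sum.inr (Sum.inl k)) (by simp) le_rfl

theorem indep_EJ (H : Cox μ F c C lam E J τ) (k : ℕ) : IndepFun (E k) (J k) μ := by
  rw [IndepFun_iff_Indep]
  exact H.hindep.indep (i := Sum.inl k) (j := Sum.inr (Sum.inl k)) (by simp)

theorem natFilt_le_K {k i : ℕ} (hi : i < k) (hτ : Measurable[Kk F E J k] (τ (i + 1))) (t : ℝ) :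
    natFilt (Yp τ J i) t ≤ Kk F E J k := by
  refine iSup₂_le fun s _ => ?_
  rw [← measurable_iff_comap_le]
  refine Measurable.ite ?_ (J_meas hi) measurable_const
  exact hτ measurableSet_Iic

theorem lam_joint (H : Cox μ F c C lam E J τ) {k : ℕ}
    (hk : ∀ i < k, Measurable[Kk F E J k] (τ (i + 1))) :
    Measurable[MeasurableSpace.prod inferInstance (Kk F E J k)]
      (fun p : ℝ × Ω => lam k (max p.1 0) p.2) := by
  refine prog_joint (m := Kk F E J k) (H.hprog k) ?_
  intro t ht
  refine (iInf₂_le (t + 1) (by simp)).trans ?_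
  refine sup_le (F_le_K (by linarith) k) ?_
  exact iSup₂_le fun i hi => natFilt_le_K (by simpa using hi) (hk i (by simpa using hi)) _

/-- good scenarios -/
def Good (c C : ℝ) (lam : ℕ → ℝ → Ω → ℝ) (E J : ℕ → Ω → ℝ) (k : ℕ) (ω : Ω) : Prop :=
  0 < E k ω ∧ J k ω ≠ 0 ∧
  AEStronglyMeasurable (fun s => lam k s ω) (volume.restrict (Ici (0:ℝ))) ∧
  ∀ᵐ s ∂(volume.restrict (Ici (0:ℝ))), c ≤ lam k s ω ∧ lam k s ω ≤ C

theorem good_aux (H : Cox μ F c C lam E J τ) {k : ℕ}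
    (hk : ∀ i < k, Measurable[Kk F E J k] (τ (i + 1))) :
    ∀ᵐ ω ∂μ, Good c C lam E J k ω := by
  have h1 := Measure.ae_ae_of_ae_prod (H.hb k)
  have hJ : ∀ᵐ ω ∂μ, J k ω ≠ 0 :=
    (prob_compl_eq_zero_iff ((H.hJmeas k) (measurableSet_singleton 0).compl)).2 (H.hJnv k)
  filter_upwards [h1, hJ, exp_pos_ae (H.hE k)] with ω a1 a2 a3
  refine ⟨a3, a2, ?_, a1⟩
  have hj := H.lam_joint hk
  have h2 : Measurable (fun s : ℝ => lam k (max s 0) ω) :=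
    @Measurable.comp _ _ _ _ (MeasurableSpace.prod inferInstance (Kk F E J k)) _ _ _ hj
      (@measurable_prodMk_right _ _ _ (Kk F E J k) ω)
  refine h2.aestronglyMeasurable.congr ?_
  filter_upwards [ae_restrict_mem measurableSet_Ici] with s hs
  rw [max_eq_left hs]

theorem Lam_aux (H : Cox μ F c C lam E J τ) {k : ℕ}
    (hk : ∀ i < k, Measurable[Kk F E J k] (τ (i + 1))) (hk' : Measurable[Kk F E J k] (τ k)) (t : ℝ) :
    Measurable[Kk F E J k] (fun ω => ∫ s in Ioc (τ k ω) t, lam k s ω) := by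
  have := meas_setIntegral_Ioc (m := Kk F E J k) (u := fun s ω => lam k (max s 0) ω)
    (H.lam_joint hk) hk' (@measurable_const _ _ _ (Kk F E J k) t)
  convert this using 2 with ω
  refine setIntegral_congr_fun measurableSet_Ioc fun s hs => ?_
  show lam k s ω = lam k (max s 0) ω
  rw [max_eq_left ((H.tau_nonneg k ω).trans hs.1.le)]

theorem tau_meas (H : Cox μ F c C lam E J τ) (k : ℕ) : Measurable[Kk F E J k] (τ k) := by
  induction k using Nat.strong_induction_on with
  | _ k ih =>
  rcases k with _ | k
  · have : τ 0 = fun _ => 0 := funext H.hτ0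
    rw [this]; exact measurable_const
  · have hk : ∀ i < k, Measurable[Kk F E J k] (τ (i + 1)) := fun i hi =>
      (ih (i + 1) (by omega)).mono (K_mono (by omega)) le_rfl
    have hL := H.Lam_aux hk (ih k (by omega))
    refine measurable_of_Iic fun t => ?_
    have hA : MeasurableSet[Kk F E J (k + 1)]
        {ω | E k ω ≤ ∫ s in Ioc (τ k ω) t, lam k s ω} := by
      refine measurableSet_le (E_meas (Nat.lt_succ_self k))
        ((hL t).mono (K_mono (Nat.le_succ k)) le_rfl)
    refine null_meas_set (H.K_null (k + 1)) hA ?_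
    filter_upwards [H.good_aux hk] with ω hω
    exact ((det_main H.hc H.hcC hω.2.2.1 hω.2.2.2 (H.tau_nonneg k ω) hω.1 (H.hτ k ω)).2.2 t).symm

theorem tau_meas' (H : Cox μ F c C lam E J τ) {i k : ℕ} (h : i ≤ k) :
    Measurable[Kk F E J k] (τ i) := (H.tau_meas i).mono (K_mono h) le_rfl

theorem good (H : Cox μ F c C lam E J τ) : ∀ᵐ ω ∂μ, ∀ k, Good c C lam E J k ω :=
  ae_all_iff.2 fun _ => H.good_aux fun _ hi => H.tau_meas' hi

theorem Lam_meas (H : Cox μ F c C lam E J τ) (k : ℕ) (t : ℝ) :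
    Measurable[Kk F E J k] (fun ω => ∫ s in Ioc (τ k ω) t, lam k s ω) :=
  H.Lam_aux (fun _ hi => H.tau_meas' hi) (H.tau_meas k) t

theorem tau_lt (H : Cox μ F c C lam E J τ) {ω : Ω} (hω : ∀ k, Good c C lam E J k ω) (k : ℕ) :
    τ k ω < τ (k + 1) ω :=
  (det_main H.hc H.hcC (hω k).2.2.1 (hω k).2.2.2 (H.tau_nonneg k ω) (hω k).1 (H.hτ k ω)).1

theorem tau_iff (H : Cox μ F c C lam E J τ) {ω : Ω} (hω : ∀ k, Good c C lam E J k ω) (k : ℕ) (t : ℝ) :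
    τ (k + 1) ω ≤ t ↔ E k ω ≤ ∫ s in Ioc (τ k ω) t, lam k s ω :=
  (det_main H.hc H.hcC (hω k).2.2.1 (hω k).2.2.2 (H.tau_nonneg k ω) (hω k).1 (H.hτ k ω)).2.2 t

theorem tau_mono (H : Cox μ F c C lam E J τ) {ω : Ω} (hω : ∀ k, Good c C lam E J k ω) :
    StrictMono (fun k => τ k ω) := strictMono_nat_of_lt_succ (H.tau_lt hω)


/-- the full filtration before regularization -/
def Hi (F : ℝ → MeasurableSpace Ω) (τ J : ℕ → Ω → ℝ) : ℝ → MeasurableSpace Ω :=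
  fun t => F t ⊔ ⨆ i : ℕ, natFilt (Yp τ J i) t

/-- sets which coincide almost surely on `P` with an element of `K` -/
def traceMS {m0 : MeasurableSpace Ω} (μ : Measure Ω) (K : MeasurableSpace Ω) (P : Ω → Prop) :
    MeasurableSpace Ω where
  MeasurableSet' A := ∃ B, MeasurableSet[K] B ∧ ∀ᵐ ω ∂μ, P ω → (ω ∈ A ↔ ω ∈ B)
  measurableSet_empty := ⟨∅, @MeasurableSet.empty _ K, by simp⟩
  measurableSet_compl := by
    rintro A ⟨B, hB, h⟩
    refine ⟨Bᶜ, hB.compl, ?_⟩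
    filter_upwards [h] with ω hω hP
    simp [hω hP]
  measurableSet_iUnion := by
    intro f hf
    choose B hB h using hf
    refine ⟨⋃ i, B i, MeasurableSet.iUnion hB, ?_⟩
    filter_upwards [ae_all_iff.2 h] with ω hω hP
    simp [fun i => hω i hP]

theorem Hi_le_trace (H : Cox μ F c C lam E J τ) (k : ℕ) {s : ℝ} (hs : 0 ≤ s) :
    Hi F τ J s ≤ traceMS μ (Kk F E J k) (fun ω => s < τ (k + 1) ω) := by
  have hK : Kk F E J k ≤ traceMS μ (Kk F E J k) (fun ω => s < τ (k + 1) ω) :=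
    fun A hA => ⟨A, hA, by simp⟩
  refine sup_le ((F_le_K hs k).trans hK) (iSup_le fun i => ?_)
  by_cases hi : i < k
  · exact (natFilt_le_K hi (H.tau_meas' hi) s).trans hK
  · refine iSup₂_le fun u hu => ?_
    rintro _ ⟨S, _, rfl⟩
    refine ⟨{_ω | (0:ℝ) ∈ S}, @MeasurableSet.const _ (Kk F E J k) _, ?_⟩
    filter_upwards [H.good] with ω hω hlt
    have h1 : τ (k + 1) ω ≤ τ (i + 1) ω := (H.tau_mono hω).monotone (by omega)
    have h2 : Yp τ J i u ω = 0 := by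
      unfold Yp
      rw [if_neg]
      have := hu.2
      linarith
    simp [h2]

theorem rc_trace (H : Cox μ F c C lam E J τ) (k : ℕ) {s : ℝ} (hs : 0 ≤ s) {A : Set Ω}
    (hA : MeasurableSet[rcReg (Hi F τ J) s] A) :
    ∃ B, MeasurableSet[Kk F E J k] B ∧ ∀ᵐ ω ∂μ, s < τ (k + 1) ω → (ω ∈ A ↔ ω ∈ B) := by
  have h1 : ∀ n : ℕ, ∃ B, MeasurableSet[Kk F E J k] B ∧
      ∀ᵐ ω ∂μ, s + 1 / ((n:ℝ) + 1) < τ (k + 1) ω → (ω ∈ A ↔ ω ∈ B) := by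
    intro n
    have hp : (0:ℝ) < 1 / ((n:ℝ) + 1) := by positivity
    have h2 : rcReg (Hi F τ J) s ≤ Hi F τ J (s + 1 / ((n:ℝ) + 1)) :=
      iInf₂_le _ (by simp only [mem_Ioi]; linarith)
    exact H.Hi_le_trace k (by linarith) A (h2 A hA)
  choose B hB h using h1
  refine ⟨⋃ N, ⋂ n, ⋂ (_ : N ≤ n), B n, ?_, ?_⟩
  · exact MeasurableSet.iUnion fun N => MeasurableSet.iInter fun n => MeasurableSet.iInter fun _ => hB n
  · filter_upwards [ae_all_iff.2 h] with ω hω hlt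
    obtain ⟨N, hN⟩ := exists_nat_one_div_lt (sub_pos.2 hlt)
    have h3 : ∀ n, N ≤ n → (ω ∈ A ↔ ω ∈ B n) := by
      intro n hn
      apply hω n
      have : 1 / ((n:ℝ) + 1) ≤ 1 / ((N:ℝ) + 1) := by gcongr
      linarith
    simp only [mem_iUnion, mem_iInter]
    constructor
    · exact fun hA => ⟨N, fun n hn => (h3 n hn).1 hA⟩
    · rintro ⟨N', hN'⟩
      exact (h3 (max N N') (le_max_left _ _)).2 (hN' _ (le_max_right _ _))

/-- integrated intensity -/
def Lm (lam : ℕ → ℝ → Ω → ℝ) (τ : ℕ → Ω → ℝ) (k : ℕ) (t : ℝ) (ω : Ω) : ℝ :=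
  ∫ s in Ioc (τ k ω) t, lam k s ω

/-- compensator piece -/
def Up (lam : ℕ → ℝ → Ω → ℝ) (τ : ℕ → Ω → ℝ) (k : ℕ) (t : ℝ) (ω : Ω) : ℝ :=
  ∫ s in Ioc 0 t, (if τ k ω < s ∧ s ≤ τ (k + 1) ω then lam k s ω else 0)

theorem det_all (H : Cox μ F c C lam E J τ) {ω : Ω} (hω : ∀ k, Good c C lam E J k ω) (k : ℕ)
    {t : ℝ} (ht : 0 ≤ t) :
    (IntegrableOn (fun s => if τ k ω < s ∧ s ≤ τ (k + 1) ω then lam k s ω else 0) (Ioc 0 t)) ∧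
    (Up lam τ k t ω = ∫ s in Ioc (min (τ k ω) t) (min (τ (k + 1) ω) t), lam k s ω) ∧
    (∫ s in Ioc 0 t, ‖(if τ k ω < s ∧ s ≤ τ (k + 1) ω then lam k s ω else 0)‖
      = Up lam τ k t ω) ∧
    (∫ s in Ioc (min (τ k ω) t) (min (τ (k + 1) ω) t), lam k s ω
      = min (E k ω) (Lm lam τ k t ω)) ∧
    (∫ s in Ioc (min (τ k ω) t) (min (τ (k + 1) ω) t), lam k s ω
      ≤ C * (min (τ (k + 1) ω) t - min (τ k ω) t)) ∧
    (0 ≤ Lm lam τ k t ω) ∧ (Lm lam τ k t ω ≤ C * t) :=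
  det_int2 H.hc H.hcC (hω k).2.2.1 (hω k).2.2.2 (H.tau_nonneg k ω) (hω k).1 (H.hτ k ω) t ht

theorem Up_eq (H : Cox μ F c C lam E J τ) {ω : Ω} (hω : ∀ k, Good c C lam E J k ω) (k : ℕ)
    {t : ℝ} (ht : 0 ≤ t) : Up lam τ k t ω = min (E k ω) (Lm lam τ k t ω) :=
  (H.det_all hω k ht).2.1.trans (H.det_all hω k ht).2.2.2.1

theorem Lm_nonneg (H : Cox μ F c C lam E J τ) {ω : Ω} (hω : ∀ k, Good c C lam E J k ω) (k : ℕ)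
    {t : ℝ} (ht : 0 ≤ t) : 0 ≤ Lm lam τ k t ω := (H.det_all hω k ht).2.2.2.2.2.1

theorem Lm_le (H : Cox μ F c C lam E J τ) {ω : Ω} (hω : ∀ k, Good c C lam E J k ω) (k : ℕ)
    {t : ℝ} (ht : 0 ≤ t) : Lm lam τ k t ω ≤ C * t := (H.det_all hω k ht).2.2.2.2.2.2

theorem Up_nonneg (H : Cox μ F c C lam E J τ) {ω : Ω} (hω : ∀ k, Good c C lam E J k ω) (k : ℕ)
    {t : ℝ} (ht : 0 ≤ t) : 0 ≤ Up lam τ k t ω := by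
  rw [H.Up_eq hω k ht]
  exact le_min (hω k).1.le (H.Lm_nonneg hω k ht)

theorem sum_Up_le (H : Cox μ F c C lam E J τ) {ω : Ω} (hω : ∀ k, Good c C lam E J k ω)
    {t : ℝ} (ht : 0 ≤ t) (n : ℕ) : ∑ k ∈ Finset.range n, Up lam τ k t ω ≤ C * t := by
  have hC : 0 < C := H.hc.trans H.hcC
  calc ∑ k ∈ Finset.range n, Up lam τ k t ω
      ≤ ∑ k ∈ Finset.range n, C * (min (τ (k + 1) ω) t - min (τ k ω) t) := by
        refine Finset.sum_le_sum fun k _ => ?_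
        exact (H.det_all hω k ht).2.1.trans_le (H.det_all hω k ht).2.2.2.2.1
    _ = C * (min (τ n ω) t - min (τ 0 ω) t) := by
        rw [← Finset.mul_sum, Finset.sum_range_sub (fun k => min (τ k ω) t)]
    _ ≤ C * t := by
        rw [H.hτ0, min_eq_left ht, sub_zero]
        gcongr
        exact min_le_right _ _

theorem summable_Up (H : Cox μ F c C lam E J τ) {ω : Ω} (hω : ∀ k, Good c C lam E J k ω)
    {t : ℝ} (ht : 0 ≤ t) : Summable (fun k => Up lam τ k t ω) :=
  summable_of_sum_range_le (fun k => H.Up_nonneg hω k ht) (H.sum_Up_le hω ht)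

theorem int_tsum (H : Cox μ F c C lam E J τ) {ω : Ω} (hω : ∀ k, Good c C lam E J k ω)
    {t : ℝ} (ht : 0 ≤ t) :
    (∫ s in Set.Ioc 0 t, ∑' k : ℕ, if τ k ω < s ∧ s ≤ τ (k + 1) ω then lam k s ω else 0)
      = ∑' k, Up lam τ k t ω := by
  symm
  refine integral_tsum_of_summable_integral_norm (fun k => (H.det_all hω k ht).1) ?_
  simp_rw [fun k => (H.det_all hω k ht).2.2.1]
  exact H.summable_Up hω ht

/-- jump part -/
def Xp (τ J : ℕ → Ω → ℝ) (h : ℝ → ℝ) (k : ℕ) (t : ℝ) (ω : Ω) : ℝ :=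
  if τ (k + 1) ω ≤ t then h (J k ω) else 0

theorem Lm_m (H : Cox μ F c C lam E J τ) (k : ℕ) (t : ℝ) : Measurable (Lm lam τ k t) :=
  (H.Lam_meas k t).mono (H.K_le k) le_rfl

theorem Xp_int (H : Cox μ F c C lam E J τ) {h : ℝ → ℝ} (hh : Measurable h) (k : ℕ)
    (hint : Integrable (fun ω => h (J k ω)) μ) (t : ℝ) : Integrable (Xp τ J h k t) μ := by
  refine Integrable.mono' hint.abs ?_ (Eventually.of_forall fun ω => ?_)
  · refine Measurable.aestronglyMeasurable ?_
    refine Measurable.ite ?_ (hh.comp (H.hJmeas k)) measurable_const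
    exact ((H.tau_meas (k + 1)).mono (H.K_le _) le_rfl) measurableSet_Iic
  · unfold Xp; split_ifs <;> simp

theorem Up_int (H : Cox μ F c C lam E J τ) (k : ℕ) {t : ℝ} (ht : 0 ≤ t) :
    Integrable (Up lam τ k t) μ := by
  have hm : Measurable fun ω => min (E k ω) (Lm lam τ k t ω) := (H.hE k).1.min (H.Lm_m k t)
  have he : (fun ω => min (E k ω) (Lm lam τ k t ω)) =ᵐ[μ] Up lam τ k t := by
    filter_upwards [H.good] with ω hω using (H.Up_eq hω k ht).symm
  refine Integrable.of_bound (hm.aestronglyMeasurable.congr he) (C * t) ?_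
  filter_upwards [H.good] with ω hω
  rw [Real.norm_of_nonneg (H.Up_nonneg hω k ht), H.Up_eq hω k ht]
  exact (min_le_right _ _).trans (H.Lm_le hω k ht)

theorem key (H : Cox μ F c C lam E J τ) {h : ℝ → ℝ} (hh : Measurable h) (k : ℕ)
    (hint : Integrable (fun ω => h (J k ω)) μ) {t : ℝ} (ht : 0 ≤ t) {B : Set Ω}
    (hB : MeasurableSet[Kk F E J k] B) :
    ∫ ω in B, (Xp τ J h k t ω - (∫ x, h (J k x) ∂μ) * Up lam τ k t ω) ∂μ = 0 := by
  have := key_identity (H.hE k) (H.hJmeas k) (H.indep_EJ k) (H.K_le k) (H.indep_K k) hh hint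
    (Y := Lm lam τ k t) (H.Lam_meas k t)
    (by filter_upwards [H.good] with ω hω using H.Lm_nonneg hω k ht) (D := C * t)
    (by filter_upwards [H.good] with ω hω using H.Lm_le hω k ht) hB
  rw [← this]
  refine integral_congr_ae (ae_restrict_of_ae ?_)
  filter_upwards [H.good] with ω hω
  rw [H.Up_eq hω k ht]
  unfold Xp
  simp only [H.tau_iff hω k t]
  rfl

theorem incr (H : Cox μ F c C lam E J τ) {h : ℝ → ℝ} (hh : Measurable h) (k : ℕ)
    (hint : Integrable (fun ω => h (J k ω)) μ) {s t : ℝ} (hs : 0 ≤ s) (hst : s ≤ t) {A : Set Ω}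
    (hAm : MeasurableSet A) (hA : MeasurableSet[rcReg (Hi F τ J) s] A) :
    ∫ ω in A, (Xp τ J h k t ω - (∫ x, h (J k x) ∂μ) * Up lam τ k t ω) ∂μ
      = ∫ ω in A, (Xp τ J h k s ω - (∫ x, h (J k x) ∂μ) * Up lam τ k s ω) ∂μ := by
  have ht := hs.trans hst
  obtain ⟨B, hB, hAB⟩ := H.rc_trace k hs hA
  have hBm := H.K_le k _ hB
  set m := ∫ x, h (J k x) ∂μ with hm
  have hi : ∀ u, 0 ≤ u → Integrable (fun ω => Xp τ J h k u ω - m * Up lam τ k u ω) μ :=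
    fun u hu => (H.Xp_int hh k hint u).sub ((H.Up_int k hu).const_mul m)
  rw [← sub_eq_zero, ← integral_sub (hi t ht).integrableOn (hi s hs).integrableOn]
  have h2 : ∫ ω in B, ((Xp τ J h k t ω - m * Up lam τ k t ω)
      - (Xp τ J h k s ω - m * Up lam τ k s ω)) ∂μ = 0 := by
    rw [integral_sub (hi t ht).integrableOn (hi s hs).integrableOn, H.key hh k hint ht hB,
      H.key hh k hint hs hB, sub_zero]
  rw [← h2, ← integral_indicator hAm, ← integral_indicator hBm]
  apply integral_congr_ae
  filter_upwards [hAB, H.good] with ω hω hg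
  rcases lt_or_ge s (τ (k + 1) ω) with hlt | hge
  · have := hω hlt
    by_cases hωA : ω ∈ A
    · rw [indicator_of_mem hωA, indicator_of_mem (this.1 hωA)]
    · rw [indicator_of_notMem hωA, indicator_of_notMem (fun h => hωA (this.2 h))]
  · have h3 : Xp τ J h k t ω - m * Up lam τ k t ω - (Xp τ J h k s ω - m * Up lam τ k s ω) = 0 := by
      have e1 := (H.tau_iff hg k s).1 hge
      have e2 := (H.tau_iff hg k t).1 (hge.trans hst)
      rw [H.Up_eq hg k ht, H.Up_eq hg k hs, min_eq_left (by exact e2), min_eq_left (by exact e1)]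
      unfold Xp
      rw [if_pos hge, if_pos (hge.trans hst)]
      ring
    simp only [indicator, h3]
    simp

theorem summable_intUp (H : Cox μ F c C lam E J τ) {t : ℝ} (ht : 0 ≤ t) :
    Summable (fun k => ∫ ω, Up lam τ k t ω ∂μ) := by
  refine summable_of_sum_range_le (c := C * t) (fun k => ?_) (fun n => ?_)
  · apply integral_nonneg_of_ae
    filter_upwards [H.good] with ω hω using H.Up_nonneg hω k ht
  · rw [← integral_finsetSum _ (fun k _ => H.Up_int k ht)]
    calc _ ≤ ∫ _ω, C * t ∂μ := by
          apply integral_mono_ae (integrable_finsetSum _ (fun k _ => H.Up_int k ht))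
            (integrable_const _)
          filter_upwards [H.good] with ω hω using H.sum_Up_le hω ht n
      _ = C * t := by simp

theorem norm_Xp (H : Cox μ F c C lam E J τ) {h : ℝ → ℝ} (hh : Measurable h) (k : ℕ)
    (hint : Integrable (fun ω => h (J k ω)) μ) {t : ℝ} (ht : 0 ≤ t) :
    ∫ ω, ‖Xp τ J h k t ω‖ ∂μ = (∫ x, |h (J k x)| ∂μ) * ∫ ω, Up lam τ k t ω ∂μ := by
  have := H.key (h := fun x => |h x|) (hh.abs) k hint.abs ht (@MeasurableSet.univ _ (Kk F E J k))
  rw [setIntegral_univ, integral_sub (H.Xp_int (h := fun x => |h x|) hh.abs k hint.abs t)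
    ((H.Up_int k ht).const_mul _), integral_const_mul, sub_eq_zero] at this
  rw [← this]
  congr 1; ext ω
  unfold Xp; split_ifs <;> simp


theorem Hi_le (H : Cox μ F c C lam E J τ) (t : ℝ) : Hi F τ J t ≤ m0 := by
  refine sup_le (H.hUC.1.2 t) (iSup_le fun i => ?_)
  exact (natFilt_le_K (Nat.lt_succ_self i) (H.tau_meas (i + 1)) t).trans (H.K_le _)

theorem Gi_le (H : Cox μ F c C lam E J τ) (t : ℝ) : rcReg (Hi F τ J) t ≤ m0 :=
  (iInf₂_le (t + 1) (by simp)).trans (H.Hi_le _)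

theorem Gi_null (H : Cox μ F c C lam E J τ) {t : ℝ} (ht : 0 ≤ t) (s : Set Ω) (hs : μ s = 0) :
    MeasurableSet[rcReg (Hi F τ J) t] s := by
  have : F 0 ≤ rcReg (Hi F τ J) t :=
    le_iInf₂ fun u hu => (H.hUC.1.1 0 u le_rfl (ht.trans (le_of_lt hu))).trans le_sup_left
  exact this _ (H.hUC.2.2 s hs)

theorem Yp_meas (i : ℕ) {u t : ℝ} (hu : 0 ≤ u) (hut : u ≤ t) :
    Measurable[rcReg (Hi F τ J) t] (Yp τ J i u) := by
  rw [measurable_iff_comap_le]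
  refine le_iInf₂ fun v hv => ?_
  refine le_trans ?_ (le_sup_right (a := F v))
  refine le_trans ?_ (le_iSup (fun i => natFilt (Yp τ J i) v) i)
  exact le_iSup₂_of_le (f := fun s (_ : s ∈ Icc (0:ℝ) v) =>
    MeasurableSpace.comap (Yp τ J i s) inferInstance) u ⟨hu, hut.trans (le_of_lt hv)⟩ le_rfl

theorem tau_Gi (H : Cox μ F c C lam E J τ) (i : ℕ) {u t : ℝ} (hu : 0 ≤ u) (hut : u ≤ t) :
    MeasurableSet[rcReg (Hi F τ J) t] {ω | τ (i + 1) ω ≤ u} := by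
  refine null_meas_set (H.Gi_null (hu.trans hut))
    (Yp_meas (F := F) (τ := τ) (J := J) i hu hut (measurableSet_singleton (0:ℝ)).compl) ?_
  filter_upwards [H.good] with ω hω
  have := (hω i).2.1
  by_cases h : τ (i + 1) ω ≤ u <;> simp [Yp, h, this]

theorem min_tau_Gi (H : Cox μ F c C lam E J τ) (i : ℕ) {t : ℝ} (ht : 0 ≤ t) :
    Measurable[rcReg (Hi F τ J) t] (fun ω => min (τ i ω) t) := by
  rcases i with _ | i
  · simp_rw [H.hτ0]; exact measurable_const
  · refine measurable_of_Iic fun x => ?_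
    by_cases hx : t ≤ x
    · have : (fun ω => min (τ (i + 1) ω) t) ⁻¹' Iic x = univ := by
        ext ω; simp [hx]
      rw [this]; exact @MeasurableSet.univ _ (rcReg (Hi F τ J) t)
    · by_cases hx0 : 0 ≤ x
      · have : (fun ω => min (τ (i + 1) ω) t) ⁻¹' Iic x = {ω | τ (i + 1) ω ≤ x} := by
          ext ω; simp [hx]
        rw [this]; exact H.tau_Gi i hx0 (not_le.1 hx).le
      · have : (fun ω => min (τ (i + 1) ω) t) ⁻¹' Iic x = ∅ := by
          ext ω
          have := H.tau_nonneg (i + 1) ω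
          simp only [mem_preimage, mem_Iic, mem_empty_iff_false, iff_false, not_le]
          exact lt_min (by linarith) (by linarith)
        rw [this]; exact @MeasurableSet.empty _ (rcReg (Hi F τ J) t)

theorem Up_Gi (H : Cox μ F c C lam E J τ) (k : ℕ) {t : ℝ} (ht : 0 ≤ t) :
    Measurable[rcReg (Hi F τ J) t] (Up lam τ k t) := by
  have hle : rcReg (fun t => F t ⊔ ⨆ i ∈ Finset.range k, natFilt (Yp τ J i) t) t
      ≤ rcReg (Hi F τ J) t :=
    iInf₂_mono fun u _ => sup_le_sup le_rfl (iSup_mono fun i => iSup_le fun _ => le_rfl)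
  have h1 := prog_joint_t (m := rcReg (Hi F τ J) t) (H.hprog k) ht hle
  have h2 := meas_setIntegral_Ioc (m := rcReg (Hi F τ J) t) (u := fun s ω => lam k (projIcc 0 t ht s) ω)
    h1 (H.min_tau_Gi k ht) (H.min_tau_Gi (k + 1) ht)
  refine null_meas_fun (H.Gi_null ht) h2 ?_
  filter_upwards [H.good] with ω hω
  rw [(H.det_all hω k ht).2.1]
  refine setIntegral_congr_fun measurableSet_Ioc fun s hs => ?_
  have h3 : 0 ≤ s := (le_min (H.tau_nonneg k ω) ht).trans hs.1.le
  have h4 : s ≤ t := hs.2.trans (min_le_right _ _)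
  show lam k (projIcc 0 t ht s) ω = lam k s ω
  rw [projIcc_of_mem ht ⟨h3, h4⟩]

theorem Xp_Gi (H : Cox μ F c C lam E J τ) {h : ℝ → ℝ} (hh : Measurable h) (k : ℕ) {t : ℝ}
    (ht : 0 ≤ t) : Measurable[rcReg (Hi F τ J) t] (Xp τ J h k t) := by
  have hg : Measurable (fun y : ℝ => if y = 0 then 0 else h y) :=
    Measurable.ite (measurableSet_singleton 0) measurable_const hh
  refine null_meas_fun (H.Gi_null ht)
    (hg.comp (Yp_meas (F := F) (τ := τ) (J := J) k ht (le_refl t))) ?_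
  filter_upwards [H.good] with ω hω
  have := (hω k).2.1
  by_cases hk : τ (k + 1) ω ≤ t <;> simp [Xp, Yp, hk, this]

end Cox

theorem l1_sum {m0 : MeasurableSpace Ω} {μ : Measure Ω} {f : ℕ → Ω → ℝ}
    (hi : ∀ k, Integrable (f k) μ) (hs : Summable fun k => ∫ ω, ‖f k ω‖ ∂μ) :
    (∀ᵐ ω ∂μ, Summable fun k => f k ω) ∧ Integrable (fun ω => ∑' k, f k ω) μ := by
  have h1 : ∀ k, ∫⁻ ω, ‖f k ω‖ₑ ∂μ = ENNReal.ofReal (∫ ω, ‖f k ω‖ ∂μ) := fun k =>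
    (ofReal_integral_norm_eq_lintegral_enorm (hi k)).symm
  have h2 : ∫⁻ ω, ∑' k, ‖f k ω‖ₑ ∂μ ≠ ∞ := by
    rw [lintegral_tsum fun k => (hi k).1.enorm]
    simp_rw [h1]
    exact hs.tsum_ofReal_ne_top
  have h3 : ∀ᵐ ω ∂μ, Summable fun k => ‖f k ω‖ := by
    filter_upwards [ae_lt_top' (AEMeasurable.ennreal_tsum fun k => (hi k).1.enorm) h2] with ω hω
    exact NNReal.summable_coe.2 (ENNReal.tsum_coe_ne_top_iff_summable.1 hω.ne)
  have h4 : ∀ᵐ ω ∂μ, Summable fun k => f k ω := by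
    filter_upwards [h3] with ω hω using hω.of_norm
  refine ⟨h4, ?_, ?_⟩
  · refine aestronglyMeasurable_of_tendsto_ae (u := atTop)
      (f := fun n ω => ∑ k ∈ Finset.range n, f k ω)
      (fun n => (integrable_finsetSum _ fun k _ => hi k).1) ?_
    filter_upwards [h4] with ω hω using hω.hasSum.tendsto_sum_nat
  · refine lt_of_le_of_lt (lintegral_mono fun ω => ?_) h2.lt_top
    exact enorm_tsum_le_tsum_enorm

theorem meas_tsum_null {m0 m : MeasurableSpace Ω} {μ : @Measure Ω m0}
    (hn : ∀ s : Set Ω, μ s = 0 → MeasurableSet[m] s) {f : ℕ → Ω → ℝ} (hf : ∀ k, Measurable[m] (f k))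
    (h : ∀ᵐ ω ∂μ, Summable fun k => f k ω) : Measurable[m] (fun ω => ∑' k, f k ω) := by
  have hS : MeasurableSet[m] {ω | Summable fun k => f k ω} := by
    rw [← compl_compl {ω | Summable fun k => f k ω}]
    exact MeasurableSet.compl (hn _ h)
  have h1 : Measurable[m] ({ω | Summable fun k => f k ω}.indicator fun ω => ∑' k, f k ω) := by
    refine measurable_of_tendsto_metrizable (f := fun n =>
      {ω | Summable fun k => f k ω}.indicator fun ω => ∑ k ∈ Finset.range n, f k ω) (fun n => ?_) ?_
    · exact (Finset.measurable_fun_sum _ fun k _ => hf k).indicator hS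
    · rw [tendsto_pi_nhds]
      intro ω
      by_cases hω : Summable fun k => f k ω
      · simp only [indicator, mem_ofPred_eq, hω, if_true]
        exact hω.hasSum.tendsto_sum_nat
      · simp only [indicator, mem_ofPred_eq, hω, if_false]
        exact tendsto_const_nhds
  refine null_meas_fun hn h1 ?_
  filter_upwards [h] with ω hω
  rw [indicator_of_mem (by exact hω)]

theorem cox_main {m0 : MeasurableSpace Ω} {μ : Measure Ω} [IsProbabilityMeasure μ]
    {F : ℝ → MeasurableSpace Ω} {c C : ℝ} {lam : ℕ → ℝ → Ω → ℝ} {E J τ : ℕ → Ω → ℝ}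
    (H : Cox μ F c C lam E J τ)
    (hJid : ∀ k, Measure.map (J k) μ = Measure.map (J 0) μ)
    (h : ℝ → ℝ) (hh : Measurable h) (hhJ : Integrable (fun ω => h (J 0 ω)) μ) :
    IsMartingale μ (rcReg (Cox.Hi F τ J)) (fun t ω =>
      (∑' k : ℕ, if τ (k + 1) ω ≤ t then h (J k ω) else 0) -
        (∫ x, h (J 0 x) ∂μ) *
          ∫ s in Set.Ioc 0 t, ∑' k : ℕ,
            if τ k ω < s ∧ s ≤ τ (k + 1) ω then lam k s ω else 0) := by
  have hid : ∀ k, IdentDistrib (J k) (J 0) μ μ := fun k =>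
    ⟨(H.hJmeas k).aemeasurable, (H.hJmeas 0).aemeasurable, hJid k⟩
  have hint : ∀ k, Integrable (fun ω => h (J k ω)) μ := fun k =>
    ((hid k).comp hh).integrable_iff.2 hhJ
  have hmean : ∀ k, ∫ x, h (J k x) ∂μ = ∫ x, h (J 0 x) ∂μ := fun k =>
    ((hid k).comp hh).integral_eq
  have habs : ∀ k, ∫ x, |h (J k x)| ∂μ = ∫ x, |h (J 0 x)| ∂μ := fun k =>
    ((hid k).comp (u := fun x => |h x|) hh.abs).integral_eq
  set m := ∫ x, h (J 0 x) ∂μ with hm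
  let Mk : ℕ → ℝ → Ω → ℝ := fun k t ω => Cox.Xp τ J h k t ω - m * Cox.Up lam τ k t ω
  have hMint : ∀ t, 0 ≤ t → ∀ k, Integrable (Mk k t) μ := fun t ht k =>
    (H.Xp_int hh k (hint k) t).sub ((H.Up_int k ht).const_mul m)
  have hXs : ∀ t, 0 ≤ t → Summable fun k => ∫ ω, ‖Cox.Xp τ J h k t ω‖ ∂μ := by
    intro t ht
    simp_rw [fun k => H.norm_Xp hh k (hint k) ht, habs]
    exact (H.summable_intUp ht).mul_left _
  have hMs : ∀ t, 0 ≤ t → Summable fun k => ∫ ω, ‖Mk k t ω‖ ∂μ := by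
    intro t ht
    refine Summable.of_nonneg_of_le (fun k => integral_nonneg fun ω => norm_nonneg _) (fun k => ?_)
      ((hXs t ht).add ((H.summable_intUp ht).mul_left |m|))
    rw [← integral_const_mul, ← integral_add (H.Xp_int hh k (hint k) t).norm
      ((H.Up_int k ht).const_mul _)]
    refine integral_mono_ae (hMint t ht k).norm ((H.Xp_int hh k (hint k) t).norm.add
      ((H.Up_int k ht).const_mul _)) ?_
    filter_upwards [H.good] with ω hω
    refine (norm_sub_le _ _).trans ?_
    rw [norm_mul, Real.norm_of_nonneg (H.Up_nonneg hω k ht), Real.norm_eq_abs m]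
  have hae : ∀ t, 0 ≤ t → ∀ᵐ ω ∂μ, ∑' k, Mk k t ω =
      (∑' k : ℕ, if τ (k + 1) ω ≤ t then h (J k ω) else 0) -
        m * ∫ s in Set.Ioc 0 t, ∑' k : ℕ,
            if τ k ω < s ∧ s ≤ τ (k + 1) ω then lam k s ω else 0 := by
    intro t ht
    filter_upwards [H.good, (l1_sum (fun k => H.Xp_int hh k (hint k) t) (hXs t ht)).1] with ω hω hs
    rw [H.int_tsum hω ht, ← tsum_mul_left]
    exact hs.tsum_sub ((H.summable_Up hω ht).mul_left m)
  have hI : ∀ t, 0 ≤ t → Integrable (fun ω => ∑' k, Mk k t ω) μ := fun t ht =>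
    (l1_sum (hMint t ht) (hMs t ht)).2
  have hMm : ∀ t, 0 ≤ t → Measurable[rcReg (Cox.Hi F τ J) t] (fun ω => ∑' k, Mk k t ω) := by
    intro t ht
    refine meas_tsum_null (H.Gi_null ht) (fun k => ?_) (l1_sum (hMint t ht) (hMs t ht)).1
    exact (H.Xp_Gi hh k ht).sub ((H.Up_Gi k ht).const_mul m)
  refine ⟨fun t ht => (hI t ht).congr (hae t ht),
    fun t ht => null_meas_fun (H.Gi_null ht) (hMm t ht) (hae t ht), ?_⟩
  intro s t hs hst
  have ht := hs.trans hst
  refine (condExp_congr_ae (EventuallyEq.symm (hae t ht))).trans (EventuallyEq.trans ?_ (hae s hs))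
  symm
  refine ae_eq_condExp_of_forall_setIntegral_eq (H.Gi_le s) (hI t ht)
    (fun A _ _ => (hI s hs).integrableOn) (fun A hA _ => ?_)
    (hMm s hs).stronglyMeasurable.aestronglyMeasurable
  have hsum : ∀ u, 0 ≤ u → ∫ ω in A, ∑' k, Mk k u ω ∂μ = ∑' k, ∫ ω in A, Mk k u ω ∂μ := by
    intro u hu
    symm
    refine integral_tsum_of_summable_integral_norm (fun k => (hMint u hu k).integrableOn) ?_
    refine Summable.of_nonneg_of_le (fun k => integral_nonneg fun ω => norm_nonneg _) (fun k => ?_)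
      (hMs u hu)
    exact setIntegral_le_integral (hMint u hu k).norm (Eventually.of_forall fun ω => norm_nonneg _)
  rw [hsum s hs, hsum t ht]
  congr 1; ext k
  have := H.incr hh k (hint k) hs hst (H.Gi_le s _ hA) hA
  rw [hmean k] at this
  exact this.symm

/-- In the Cox construction with infinitely many jumps, for every measurable
`h : ℝ → ℝ` with `h(J_1)` integrable, the process
`M^h_t = Σ_k h(J_k)·1_{τ_k ≤ t} − E[h(J_1)]·∫_0^t Σ_k 1_{τ_{k-1} < s ≤ τ_k} λ^k_s ds`
is a `Gi`-martingale. -/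
theorem cox_construction_h {m0 : MeasurableSpace Ω} (μ : Measure Ω) [IsProbabilityMeasure μ]
    (F : ℝ → MeasurableSpace Ω) (hUC : UsualConditions μ F)
    (c C : ℝ) (hc : 0 < c) (hcC : c < C)
    (lam : ℕ → ℝ → Ω → ℝ)
    (hlam_bdd : ∀ k : ℕ, ∀ᵐ p ∂(μ.prod (volume.restrict (Set.Ici (0:ℝ)))),
      c ≤ lam k p.2 p.1 ∧ lam k p.2 p.1 ≤ C)
    (E J : ℕ → Ω → ℝ)
    (hE : ∀ k, IsExpOne μ (E k))
    (hJmeas : ∀ k, Measurable (J k)) (hJint : ∀ k, Integrable (J k) μ)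
    (hJid : ∀ k, Measure.map (J k) μ = Measure.map (J 0) μ)
    (hJnonvanish : ∀ k, μ {ω | J k ω ≠ 0} = 1)
    (hindep : iIndep (fun i : ℕ ⊕ ℕ ⊕ Unit =>
      Sum.elim (fun k => MeasurableSpace.comap (E k) inferInstance)
        (Sum.elim (fun k => MeasurableSpace.comap (J k) inferInstance)
          (fun _ => Finfty F)) i) μ)
    (τ : ℕ → Ω → ℝ)
    (hτ0 : ∀ ω, τ 0 ω = 0)
    (hτ : ∀ (k : ℕ) (ω : Ω), τ (k + 1) ω =
      sInf {t : ℝ | τ k ω < t ∧ E k ω ≤ ∫ s in Set.Ioc (τ k ω) t, lam k s ω})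
    (G : ℕ → ℝ → MeasurableSpace Ω)
    (hG : ∀ k : ℕ, G k = rcReg (fun t => F t ⊔
      ⨆ i ∈ Finset.range k, natFilt (fun s ω => if τ (i + 1) ω ≤ s then J i ω else 0) t))
    (Gi : ℝ → MeasurableSpace Ω)
    (hGi : Gi = rcReg (fun t => F t ⊔
      ⨆ i : ℕ, natFilt (fun s ω => if τ (i + 1) ω ≤ s then J i ω else 0) t))
    (hprog : ∀ k : ℕ, ProgMeas (G k) (lam k))
    (h : ℝ → ℝ) (hh : Measurable h) (hhJ : Integrable (fun ω => h (J 0 ω)) μ) :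
    IsMartingale μ Gi (fun t ω =>
      (∑' k : ℕ, if τ (k + 1) ω ≤ t then h (J k ω) else 0) -
        (∫ x, h (J 0 x) ∂μ) *
          ∫ s in Set.Ioc 0 t, ∑' k : ℕ, if τ k ω < s ∧ s ≤ τ (k + 1) ω then lam k s ω else 0) := by
  have H : Cox μ F c C lam E J τ :=
    { hUC := hUC, hc := hc, hcC := hcC, hb := hlam_bdd, hE := hE, hJmeas := hJmeas,
      hJnv := hJnonvanish, hindep := hindep, hτ0 := hτ0, hτ := hτ,
      hprog := fun k => by
        have h1 := hprog k
        rw [hG k] at h1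
        exact h1 }
  rw [hGi]
  exact cox_main H hJid h hh hhJ

end InvMarkovJump
end
end
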